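/- Let B be a standard graded polynomial ring over a field K and let I = ⟨f_1, ..., f_{n+1}⟩ be a graded ideal of linear type with grade(I) = n, deg f_j = d_j. Then the Rees algebra R(I), as a module over S = K[x_1,...,x_m, y_1,...,y_{n+1}] (with deg x_i = (1,0), deg y_j = (d_j,1)), has y-regularity equal to 0; i.e., all bigraded shifts (a,b) appearing at homological degree i in the minimal bigraded free resolution of R(I) satisfy b ≤ i. -/

import Mathlib

open Ideal

/-- A sequence `f 0, …, f (n-1)` is a *d-sequence* in `A` if
`(⟨f_0,…,f_{i-1}⟩ : f_i) ∩ ⟨f_0,…,f_{n-1}⟩ = ⟨f_0,…,f_{i-1}⟩` for every `i`. -/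
def IsDSequence {A : Type*} [CommRing A] {n : ℕ} (f : Fin n → A) : Prop :=
  ∀ i : Fin n,
    (Ideal.span (f '' {j | j < i})).colon (Ideal.span {f i}) ⊓ Ideal.span (Set.range f)
      = Ideal.span (f '' {j | j < i})

/-- A (proper) regular sequence: each `f i` is a nonzerodivisor modulo the previous ones,
and the sequence generates a proper ideal. -/
def IsRegSeq {A : Type*} [CommRing A] {n : ℕ} (f : Fin n → A) : Prop :=
  (∀ i : Fin n, ∀ a : A, a * f i ∈ Ideal.span (f '' {j | j < i}) →
      a ∈ Ideal.span (f '' {j | j < i}))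
  ∧ Ideal.span (Set.range f) ≠ ⊤

/-- Extension of an `ℕ`-graded family of submodules to `ℤ` (zero in negative degrees). -/
def zg {K A : Type*} [Semiring K] [AddCommMonoid A] [Module K A]
    (𝒜 : ℕ → Submodule K A) : ℤ → Submodule K A :=
  fun z => if 0 ≤ z then 𝒜 z.toNat else ⊥

/-- The irrelevant (graded maximal) ideal of a graded algebra. -/
def irrel {K A : Type*} [CommRing K] [CommRing A] [Algebra K A]
    (𝒜 : ℕ → Submodule K A) : Ideal A :=
  Ideal.span (⋃ n : ℕ, ((𝒜 (n + 1) : Submodule K A) : Set A))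

/-- `𝒜` is a standard grading: `𝒜 0 = K·1`, the grading is generated in degree one,
and the degree-one part is finitely generated. -/
def IsStdGraded {K A : Type*} [CommSemiring K] [Semiring A] [Algebra K A]
    (𝒜 : ℕ → Submodule K A) : Prop :=
  𝒜 0 = 1 ∧ (∀ n : ℕ, 𝒜 (n + 1) = 𝒜 1 * 𝒜 n) ∧ (𝒜 1).FG

/-- A minimal graded free resolution of the graded module `M` (graded pieces `ℳ`) over the
`γ`-graded ring `A` (graded pieces `𝒜`, graded maximal ideal `𝔪`):
free modules `ι i →₀ A` with generator degrees `σ i`, differentials `d`, augmentation `ε`,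
which is exact, with graded differentials and augmentation, and minimal
(all differentials land in `𝔪 • F`). -/
structure MinGradedFreeRes (K : Type) [Field K] (A : Type) [CommRing A] [Algebra K A]
    {γ : Type} [AddCommGroup γ] (𝒜 : γ → Submodule K A) (𝔪 : Ideal A)
    (M : Type) [AddCommGroup M] [Module A M] [Module K M]
    (ℳ : γ → Submodule K M) where
  ι : ℕ → Type
  fin : ∀ i, Finite (ι i)
  σ : ∀ i, ι i → γ
  d : ∀ i, (ι (i + 1) →₀ A) →ₗ[A] (ι i →₀ A)
  ε : (ι 0 →₀ A) →ₗ[A] M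
  exact_d : ∀ i, Function.Exact (d (i + 1)) (d i)
  exact_ε : Function.Exact (d 0) ε
  surj : Function.Surjective ε
  graded_d : ∀ (i : ℕ) (j : γ) (f : ι (i + 1) →₀ A),
      (∀ k, f k ∈ 𝒜 (j - σ (i + 1) k)) → ∀ k, (d i f) k ∈ 𝒜 (j - σ i k)
  graded_ε : ∀ (j : γ) (f : ι 0 →₀ A),
      (∀ k, f k ∈ 𝒜 (j - σ 0 k)) → ε f ∈ ℳ j
  minimal : ∀ (i : ℕ) (f : ι (i + 1) →₀ A), d i f ∈ 𝔪 • (⊤ : Submodule A (ι i →₀ A))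

/-- Castelnuovo–Mumford regularity read off from a minimal graded free resolution:
`sup { (degree of a generator of F_i) - i }`. -/
noncomputable def MinGradedFreeRes.reg {K : Type} [Field K] {A : Type} [CommRing A]
    [Algebra K A] {𝒜 : ℤ → Submodule K A} {𝔪 : Ideal A} {M : Type} [AddCommGroup M]
    [Module A M] [Module K M] {ℳ : ℤ → Submodule K M}
    (R : MinGradedFreeRes K A 𝒜 𝔪 M ℳ) : ℤ :=
  sSup {x : ℤ | ∃ (i : ℕ) (k : R.ι i), x = R.σ i k - (i : ℤ)}

/-- The graded pieces of a quotient module `A ⧸ J`. -/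
def quotPieces {K A : Type*} [Field K] [CommRing A] [Algebra K A]
    (𝒜 : ℕ → Submodule K A) (J : Ideal A) : ℤ → Submodule K (A ⧸ J) :=
  fun j => (zg 𝒜 j).map ((J.mkQ).restrictScalars K)


/-- The element `f·X ∈ R(I)` for `f ∈ I`. -/
noncomputable def fX {B : Type*} [CommRing B] (I : Ideal B) (g : B) (hg : g ∈ I) :
    reesAlgebra I :=
  ⟨Polynomial.C g * Polynomial.X, by
    rw [mem_reesAlgebra_iff]
    intro i
    rcases eq_or_ne i 1 with h | h
    · subst h; simpa using hg
    · simp [Polynomial.coeff_C_mul, Polynomial.coeff_X, h, Ne.symm h]⟩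

/-- The presentation `S = B[y_0,…,y_n] → R(I)`, `y_j ↦ f_j X`. -/
noncomputable def reesStructureMap {B : Type*} [CommRing B] {n : ℕ} (I : Ideal B)
    (f : Fin (n + 1) → B) (hf : ∀ j, f j ∈ I) :
    MvPolynomial (Fin (n + 1)) B →ₐ[B] reesAlgebra I :=
  MvPolynomial.aeval (fun j => fX I (f j) (hf j))

/-- The `S`-module structure on `R(I)` induced by the presentation. -/
noncomputable def reesModule {B : Type*} [CommRing B] {n : ℕ} (I : Ideal B)
    (f : Fin (n + 1) → B) (hf : ∀ j, f j ∈ I) :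
    Module (MvPolynomial (Fin (n + 1)) B) (reesAlgebra I) :=
  Module.compHom _ (reesStructureMap I f hf).toRingHom

/-- `p ∈ S` is linear in the `y`-variables. -/
def YLinear {B : Type*} [CommRing B] {n : ℕ} (p : MvPolynomial (Fin (n + 1)) B) : Prop :=
  ∀ w : Fin (n + 1) →₀ ℕ, MvPolynomial.coeff w p ≠ 0 → (∑ j, w j) ≤ 1

/-- `I` is of linear type (with respect to the presentation `φ` coming from the chosen
generators): the defining ideal of the Rees algebra is generated by elements that are
linear in the second set of variables. -/
def IsLinearTypePres {B : Type*} [CommRing B] {n : ℕ} {I : Ideal B}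
    (φ : MvPolynomial (Fin (n + 1)) B →ₐ[B] reesAlgebra I) : Prop :=
  ∃ G : Set (MvPolynomial (Fin (n + 1)) B),
    (∀ p ∈ G, YLinear p) ∧ RingHom.ker φ.toRingHom = Ideal.span G

/-- A free resolution of `M` over `A`. -/
structure FreeRes (A : Type*) [CommRing A] (M : Type*) [AddCommGroup M] [Module A M] where
  ι : ℕ → Type
  d : ∀ i, (ι (i + 1) →₀ A) →ₗ[A] (ι i →₀ A)
  ε : (ι 0 →₀ A) →ₗ[A] M
  exact_d : ∀ i, Function.Exact (d (i + 1)) (d i)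
  exact_ε : Function.Exact (d 0) ε
  surj : Function.Surjective ε

/-- Projective dimension, as the least length of a free resolution. -/
noncomputable def projDim (A : Type*) [CommRing A] (M : Type*) [AddCommGroup M]
    [Module A M] : ℕ∞ :=
  sInf {e : ℕ∞ | ∃ k : ℕ, e = (k : ℕ∞) ∧
    ∃ R : FreeRes A M, ∀ i : ℕ, k < i → IsEmpty (R.ι i)}

/-- The height of an ideal: the infimum of the heights of primes containing it. -/
noncomputable def idealHeight {A : Type*} [CommRing A] (I : Ideal A) : ℕ∞ :=
  ⨅ (p : PrimeSpectrum A) (_ : I ≤ p.asIdeal), Order.height p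

/-- The minimal number of generators of an ideal. -/
noncomputable def minGens {A : Type*} [CommRing A] (I : Ideal A) : ℕ :=
  sInf {k : ℕ | ∃ g : Fin k → A, I = Ideal.span (Set.range g)}


/-- The `(a,b)`-bigraded piece of `B`-coefficients indexed by a `y`-exponent `w`
(with `deg x_i = (1,0)`, `deg y_j = (d_j, 1)`). -/
noncomputable def SAux (K : Type) [Field K] (m n : ℕ) (d : Fin (n + 1) → ℕ)
    (ab : ℤ × ℤ) (w : Fin (n + 1) →₀ ℕ) : Submodule K (MvPolynomial (Fin m) K) :=
  if (∑ j, (w j : ℤ)) = ab.2 ∧ 0 ≤ ab.1 - ∑ j, (w j : ℤ) * (d j : ℤ) then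
    MvPolynomial.homogeneousSubmodule (Fin m) K (ab.1 - ∑ j, (w j : ℤ) * (d j : ℤ)).toNat
  else ⊥

/-- The bigraded pieces of `S = B[y_0,…,y_n]` with `deg x_i = (1,0)`, `deg y_j = (d_j,1)`. -/
noncomputable def SPieces (K : Type) [Field K] (m n : ℕ) (d : Fin (n + 1) → ℕ)
    (ab : ℤ × ℤ) : Submodule K (MvPolynomial (Fin (n + 1)) (MvPolynomial (Fin m) K)) where
  carrier := {p | ∀ w, MvPolynomial.coeff w p ∈ SAux K m n d ab w}
  add_mem' := by
    intro p q hp hq w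
    rw [MvPolynomial.coeff_add]
    exact add_mem (hp w) (hq w)
  zero_mem' := by
    intro w
    rw [MvPolynomial.coeff_zero]
    exact zero_mem _
  smul_mem' := by
    intro c p hp w
    rw [MvPolynomial.coeff_smul]
    exact Submodule.smul_mem _ c (hp w)

/-- The `(a,b)`-bigraded piece of `R(I) ⊆ B[X]` at the `X`-exponent `i`: zero unless
`i = b` and `a ≥ 0`, in which case it is `(I^i)_a`. -/
noncomputable def RAux (K : Type) [Field K] (m : ℕ) (I : Ideal (MvPolynomial (Fin m) K))
    (ab : ℤ × ℤ) (i : ℕ) : Submodule K (MvPolynomial (Fin m) K) :=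
  if (i : ℤ) = ab.2 ∧ 0 ≤ ab.1 then
    (Submodule.restrictScalars K (I ^ i)) ⊓
      MvPolynomial.homogeneousSubmodule (Fin m) K ab.1.toNat
  else ⊥

/-- The bigraded pieces of the Rees algebra `R(I)`. -/
noncomputable def RPieces (K : Type) [Field K] (m : ℕ) (I : Ideal (MvPolynomial (Fin m) K))
    (ab : ℤ × ℤ) : Submodule K (reesAlgebra I) where
  carrier := {x | ∀ i : ℕ, (x : Polynomial (MvPolynomial (Fin m) K)).coeff i ∈ RAux K m I ab i}
  add_mem' := by
    intro x y hx hy i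
    rw [Subalgebra.coe_add, Polynomial.coeff_add]
    exact add_mem (hx i) (hy i)
  zero_mem' := by
    intro i
    rw [show (((0 : reesAlgebra I) : Polynomial (MvPolynomial (Fin m) K))) = 0 from rfl,
      Polynomial.coeff_zero]
    exact zero_mem _
  smul_mem' := by
    intro c x hx i
    rw [show (((c • x : reesAlgebra I) : Polynomial (MvPolynomial (Fin m) K)))
        = c • (x : Polynomial (MvPolynomial (Fin m) K)) from rfl,
      Polynomial.coeff_smul]
    exact Submodule.smul_mem _ c (hx i)

/-- The bigraded irrelevant maximal ideal of `S`. -/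
noncomputable def mS (K : Type) [Field K] (m n : ℕ) :
    Ideal (MvPolynomial (Fin (n + 1)) (MvPolynomial (Fin m) K)) :=
  Ideal.span
    (Set.range (MvPolynomial.X : Fin (n + 1) →
        MvPolynomial (Fin (n + 1)) (MvPolynomial (Fin m) K)) ∪
      Set.range (fun i : Fin m =>
        (MvPolynomial.C (MvPolynomial.X i) :
          MvPolynomial (Fin (n + 1)) (MvPolynomial (Fin m) K))))

/-!
The Koszul homology `H_i(f; B)` vanishes for `i ≥ 2` by depth sensitivity. A nonzero class in the
top nonvanishing degree, chosen so that its annihilator is an associated prime `P ⊇ I`, would gain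
`|g|` degrees when a locally regular sequence `g` in `P` is adjoined to `f`, whereas the homology of
the longer Koszul complex vanishes at `P` in degrees above `n + 1`. As `ht P ≥ n`, there is such a
`g` with `|g| ≥ n`.

Consequently the approximation complex `𝒵`, formed by the cycles of the Koszul complex of `f` over
`S = B[y]` with the Koszul differential of `y`, is acyclic and resolves `Sym(I) ≅ R(I)`. The Koszul
homology of `𝒵_i` with respect to `y` is concentrated in `y`-degree `i`, because cycles can be
divided by the variables. The long exact sequences along `𝒵` then give `Tor_j^S(R(I), S/(y)) = 0`
in `y`-degrees above `j`.

Along a minimal resolution `F` the same vanishing passes from the `i`-th to the `(i+1)`-st syzygy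
module, with a shift by `1`, and Nakayama's lemma turns it into the bound `i` for the `y`-degrees of
the generators of `F_i`.
-/

/-! ### Koszul complexes -/

/-- The total module of the Koszul complex on a list of indices with coefficients in `N`.
It is the iterated mapping cone: `Koszul N (a :: l)` consists of pairs `(x, y)` standing for
`x + e_a ∧ y`. -/
def Koszul {α : Type*} (N : Type*) : List α → Type _
  | [] => N
  | _ :: l => Koszul N l × Koszul N l

namespace Koszul

variable {α β R N N' : Type*}

theorem cons_ext {a : α} {l : List α} {z z' : Koszul N (a :: l)} (h₁ : z.1 = z'.1)
    (h₂ : z.2 = z'.2) : z = z' :=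
  Prod.ext h₁ h₂

instance instAddCommGroup (N : Type*) [AddCommGroup N] :
    (l : List α) → AddCommGroup (Koszul N l)
  | [] => inferInstanceAs (AddCommGroup N)
  | _ :: l => @Prod.instAddCommGroup _ _ (instAddCommGroup N l) (instAddCommGroup N l)

instance instModule (R N : Type*) [Semiring R] [AddCommGroup N] [Module R N] :
    (l : List α) → Module R (Koszul N l)
  | [] => inferInstanceAs (Module R N)
  | _ :: l => @Prod.instModule _ _ _ _ _ _ (instModule R N l) (instModule R N l)

section Additive

variable [AddCommGroup N'] [AddCommGroup N]

/-- The map of Koszul complexes induced by a map of coefficients. -/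
def map (g : N →+ N') : (l : List α) → Koszul N l →+ Koszul N' l
  | [] => g
  | _ :: l => (map g l).prodMap (map g l)

/-- The elements of exterior degree `j` with coefficients in the subgroup `W`. -/
def piece (W : AddSubgroup N) : (l : List α) → ℤ → AddSubgroup (Koszul N l)
  | [], j => if j = 0 then W else ⊥
  | _ :: l, j => (piece W l j).prod (piece W l (j - 1))

/-- The inclusion of the coefficients as the elements of exterior degree `0`. -/
def incl : (l : List α) → N →+ Koszul N l
  | [] => AddMonoidHom.id N
  | _ :: l => (incl l).prod 0

/-- The projection to the component of exterior degree `0`. -/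
def proj : (l : List α) → Koszul N l →+ N
  | [] => AddMonoidHom.id N
  | _ :: l => (proj l).comp (AddMonoidHom.fst _ _)

theorem map_cons (g : N →+ N') (a : α) (l : List α) (x y : Koszul N l) :
    map g (a :: l) (x, y) = (map g l x, map g l y) := rfl

theorem mem_piece_nil {W : AddSubgroup N} {j : ℤ} {x : Koszul N ([] : List α)} :
    x ∈ piece W ([] : List α) j ↔ if j = 0 then x ∈ W else x = 0 := by
  split_ifs with h
  · subst h
    simp only [piece]
    rfl
  · have h_bot : piece W ([] : List α) j = ⊥ := if_neg h
    rw [h_bot]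
    exact AddSubgroup.mem_bot

theorem proj_incl (l : List α) (x : N) : proj l (incl l x) = x := by
  induction l with
  | nil => rfl
  | cons _ _ ih => exact ih

theorem map_incl (g : N →+ N') (l : List α) (x : N) : map g l (incl l x) = incl l (g x) := by
  induction l with
  | nil => rfl
  | cons _ l ih => exact cons_ext ih (_root_.map_zero (map g l))

theorem map_map {N'' : Type*} [AddCommGroup N''] (h : N' →+ N'') (g : N →+ N') (l : List α)
    (x : Koszul N l) : map h l (map g l x) = map (h.comp g) l x := by
  induction l with
  | nil => rfl
  | cons a l ih => exact cons_ext (ih x.1) (ih x.2)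

theorem map_id (l : List α) (x : Koszul N l) : map (AddMonoidHom.id N) l x = x := by
  induction l with
  | nil => rfl
  | cons a l ih => exact cons_ext (ih x.1) (ih x.2)

theorem map_sum {ι : Type*} (F : Finset ι) (g : ι → N →+ N') (l : List α) (x : Koszul N l) :
    map (∑ i ∈ F, g i) l x = ∑ i ∈ F, map (g i) l x := by
  induction l with
  | nil => exact AddMonoidHom.finsetSum_apply g F x
  | cons a l ih =>
    let y i : Koszul N' l × Koszul N' l := map (g i) (a :: l) x
    exact cons_ext ((ih x.1).trans (Prod.fst_sum (s := F) (f := y)).symm)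
      ((ih x.2).trans (Prod.snd_sum (s := F) (f := y)).symm)

theorem map_mem_piece {g : N →+ N'} {W : AddSubgroup N} {W' : AddSubgroup N'}
    (h : ∀ x ∈ W, g x ∈ W') {l : List α} {j : ℤ} {x : Koszul N l} (hx : x ∈ piece W l j) :
    map g l x ∈ piece W' l j := by
  induction l generalizing j with
  | nil =>
    rw [mem_piece_nil] at hx ⊢
    split_ifs at hx ⊢
    · exact h x hx
    · rw [hx, _root_.map_zero]
  | cons a l ih => exact ⟨ih hx.1, ih hx.2⟩

theorem piece_mono {W W' : AddSubgroup N} (h : W ≤ W') {l : List α} {j : ℤ} :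
    piece W l j ≤ piece W' l j := fun x hx =>
  map_id l x ▸ map_mem_piece (g := AddMonoidHom.id N) (fun _ hy => h hy) hx

theorem map_eq_self {g : N →+ N} {W : AddSubgroup N} (h : ∀ x ∈ W, g x = x) {l : List α} {j : ℤ}
    {x : Koszul N l} (hx : x ∈ piece W l j) : map g l x = x := by
  induction l generalizing j with
  | nil =>
    rw [mem_piece_nil] at hx
    split_ifs at hx
    · exact h x hx
    · rw [hx, _root_.map_zero]
  | cons a l ih => exact cons_ext (ih hx.1) (ih hx.2)

theorem eq_zero_of_forall_map_eq_zero {ι : Type*} {g : ι → N →+ N'} {W : AddSubgroup N}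
    (h : ∀ x ∈ W, (∀ i, g i x = 0) → x = 0) {l : List α} {j : ℤ} {x : Koszul N l}
    (hx : x ∈ piece W l j) (hgx : ∀ i, map (g i) l x = 0) : x = 0 := by
  induction l generalizing j with
  | nil =>
    rw [mem_piece_nil] at hx
    split_ifs at hx
    · exact h x hx hgx
    · exact hx
  | cons a l ih =>
    exact cons_ext (ih hx.1 fun i => congrArg Prod.fst (hgx i))
      (ih hx.2 fun i => congrArg Prod.snd (hgx i))

theorem exists_map_eq {g : N →+ N'} {W : AddSubgroup N} {l : List α} {j : ℤ} {y : Koszul N' l}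
    (hy : y ∈ piece (W.map g) l j) : ∃ x ∈ piece W l j, map g l x = y := by
  induction l generalizing j with
  | nil =>
    by_cases hj : j = 0
    · subst hj
      exact mem_piece_nil.1 hy
    · rw [mem_piece_nil, if_neg hj] at hy
      exact ⟨0, zero_mem _, by rw [hy, _root_.map_zero]⟩
  | cons a l ih =>
    obtain ⟨x₁, h₁, e₁⟩ := ih hy.1
    obtain ⟨x₂, h₂, e₂⟩ := ih hy.2
    exact ⟨(x₁, x₂), ⟨h₁, h₂⟩, cons_ext e₁ e₂⟩

theorem mem_piece_inf_ker {g : N →+ N'} {W : AddSubgroup N} {l : List α} {j : ℤ}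
    {x : Koszul N l} : x ∈ piece (W ⊓ g.ker) l j ↔ x ∈ piece W l j ∧ map g l x = 0 := by
  induction l generalizing j with
  | nil =>
    simp only [mem_piece_nil]
    split_ifs
    · rfl
    · exact (and_iff_left_of_imp fun h => by rw [h, _root_.map_zero]).symm
  | cons a l ih => exact (and_congr ih ih).trans (and_and_and_comm.trans
      (and_congr_right' Prod.mk_eq_zero.symm))

theorem eq_zero_of_neg {W : AddSubgroup N} {l : List α} {j : ℤ} (hj : j < 0) {x : Koszul N l}
    (hx : x ∈ piece W l j) : x = 0 := by
  induction l generalizing j with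
  | nil => rwa [mem_piece_nil, if_neg hj.ne] at hx
  | cons a l ih => exact cons_ext (ih hj hx.1) (ih (by lia) hx.2)

theorem eq_zero_of_length_lt {W : AddSubgroup N} {l : List α} {j : ℤ} (hj : l.length < j)
    {x : Koszul N l} (hx : x ∈ piece W l j) : x = 0 := by
  induction l generalizing j with
  | nil => rwa [mem_piece_nil, if_neg (by simpa using hj.ne')] at hx
  | cons a l ih =>
    rw [List.length_cons, Nat.cast_succ] at hj
    exact cons_ext (ih (by lia) hx.1) (ih (by lia) hx.2)

theorem incl_mem_piece {W : AddSubgroup N} {l : List α} {x : N} (hx : x ∈ W) :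
    incl l x ∈ piece W l 0 := by
  induction l with
  | nil => exact mem_piece_nil.2 hx
  | cons a l ih => exact ⟨ih, zero_mem _⟩

theorem eq_zero_of_incl_mem_piece {W : AddSubgroup N} {l : List α} {j : ℤ} (hj : j ≠ 0) {x : N}
    (hx : incl l x ∈ piece W l j) : x = 0 := by
  induction l with
  | nil => rwa [mem_piece_nil, if_neg hj] at hx
  | cons a l ih => exact ih hx.1

theorem proj_mem {W : AddSubgroup N} {l : List α} {x : Koszul N l} (hx : x ∈ piece W l 0) :
    proj l x ∈ W := by
  induction l with
  | nil => exact mem_piece_nil.1 hx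
  | cons a l ih => exact ih hx.1

theorem incl_proj {W : AddSubgroup N} {l : List α} {x : Koszul N l} (hx : x ∈ piece W l 0) :
    incl l (proj l x) = x := by
  induction l with
  | nil => rfl
  | cons a l ih => exact cons_ext (ih hx.1) (eq_zero_of_neg (by lia) hx.2).symm

end Additive

section Differential

variable [CommRing R] [AddCommGroup N] [Module R N]

/-- The Koszul differential, `d (x + e_a ∧ y) = d x + r a • y - e_a ∧ d y`. -/
def d (r : α → R) : (l : List α) → Koszul N l →ₗ[R] Koszul N l
  | [] => 0
  | a :: l => ((d r l).comp (LinearMap.fst R _ _) + r a • LinearMap.snd R _ _).prod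
      (-(d r l).comp (LinearMap.snd R _ _))

theorem d_cons (r : α → R) (a : α) (l : List α) (x y : Koszul N l) :
    d r (a :: l) (x, y) = (d r l x + r a • y, -d r l y) := rfl

theorem smul_eq_map (s : R) (l : List α) (x : Koszul N l) :
    s • x = map (DistribSMul.toAddMonoidHom N s) l x := by
  induction l with
  | nil => rfl
  | cons a l ih => exact cons_ext (ih x.1) (ih x.2)

theorem smul_incl (s : R) (l : List α) (x : N) : s • incl l x = incl l (s • x) := by
  rw [smul_eq_map, map_incl]; rfl

theorem proj_smul (s : R) (l : List α) (x : Koszul N l) : proj l (s • x) = s • proj l x := by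
  induction l with
  | nil => rfl
  | cons a l ih => exact ih x.1

theorem d_incl (r : α → R) (l : List α) (x : N) : d r l (incl l x) = 0 := by
  induction l with
  | nil => rfl
  | cons a l ih =>
    refine cons_ext ?_ ?_
    · change d r l (incl l x) + r a • (0 : Koszul N l) = 0
      rw [ih, smul_zero, add_zero]
    · exact neg_eq_zero.2 (_root_.map_zero (d r l))

theorem smul_mem_piece {s : R} {W W' : AddSubgroup N} (h : ∀ x ∈ W, s • x ∈ W') {l : List α}
    {j : ℤ} {x : Koszul N l} (hx : x ∈ piece W l j) : s • x ∈ piece W' l j :=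
  smul_eq_map s l x ▸ map_mem_piece h hx

theorem d_mem_piece {r : α → R} {W W' : AddSubgroup N} {l : List α}
    (h : ∀ a ∈ l, ∀ x ∈ W, r a • x ∈ W') {j : ℤ} {x : Koszul N l} (hx : x ∈ piece W l j) :
    d r l x ∈ piece W' l (j - 1) := by
  induction l generalizing j with
  | nil => exact zero_mem _
  | cons a l ih =>
    rw [List.forall_mem_cons] at h
    exact ⟨add_mem (ih h.2 hx.1) (smul_mem_piece h.1 hx.2), (piece W' l _).neg_mem (ih h.2 hx.2)⟩

/-- The semilinearity hypothesis is only imposed on the scalars occurring in the differentials, so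
that the lemma also covers coefficient extraction and division by variables. -/
theorem map_smul {R' : Type*} [CommRing R'] [AddCommGroup N'] [Module R' N'] {g : N →+ N'}
    {s : R} {s' : R'} (h : ∀ x, g (s • x) = s' • g x) (l : List α) (x : Koszul N l) :
    map g l (s • x) = s' • map g l x := by
  rw [smul_eq_map, smul_eq_map, map_map, map_map]
  congr 2
  exact AddMonoidHom.ext h

theorem map_d {R' : Type*} [CommRing R'] [AddCommGroup N'] [Module R' N'] {g : N →+ N'}
    {r : α → R} {r' : α → R'} {l : List α} (h : ∀ a ∈ l, ∀ x, g (r a • x) = r' a • g x)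
    (x : Koszul N l) : map g l (d r l x) = d r' l (map g l x) := by
  induction l with
  | nil => exact _root_.map_zero g
  | cons a l ih =>
    rw [List.forall_mem_cons] at h
    obtain ⟨x, y⟩ := x
    rw [d_cons, map_cons, map_cons, d_cons, _root_.map_add, _root_.map_neg, ih h.2, ih h.2,
      map_smul h.1]

theorem d_d_anticomm (r s : α → R) (l : List α) (x : Koszul N l) :
    d r l (d s l x) = -d s l (d r l x) := by
  induction l with
  | nil => exact neg_zero.symm
  | cons a l ih =>
    obtain ⟨x, y⟩ := x
    simp only [d_cons, _root_.map_add, _root_.map_neg, _root_.map_smul, ih x, ih y]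
    refine cons_ext ?_ rfl
    change -d s l (d r l x) + s a • d r l y + r a • -d s l y
      = -(d s l (d r l x) + r a • d s l y + s a • -d r l y)
    rw [smul_neg, smul_neg]
    abel

theorem d_d (r : α → R) (l : List α) (x : Koszul N l) : d r l (d r l x) = 0 := by
  induction l with
  | nil => rfl
  | cons a l ih =>
    obtain ⟨x, y⟩ := x
    simp only [d_cons, _root_.map_add, _root_.map_neg, _root_.map_smul, ih x, ih y]
    refine cons_ext ?_ (neg_neg _)
    change 0 + r a • d r l y + r a • -d r l y = 0
    rw [smul_neg]
    abel

theorem d_mul_left (s : R) (r : α → R) (l : List α) (x : Koszul N l) :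
    d (fun a => s * r a) l x = s • d r l x := by
  induction l with
  | nil => exact (smul_zero s).symm
  | cons a l ih =>
    refine cons_ext ?_ ?_
    · change d (fun a => s * r a) l x.1 + (s * r a) • x.2 = s • (d r l x.1 + r a • x.2)
      rw [ih, smul_add, smul_smul]
    · change -d (fun a => s * r a) l x.2 = s • -d r l x.2
      rw [ih, smul_neg]

theorem exists_d_eq_incl_sum {W : AddSubgroup N} {c : α → N} (hc : ∀ a, c a ∈ W) (l : List α) :
    ∃ v ∈ piece W l 1, ∀ r : α → R, d r l v = incl l (l.map fun a => r a • c a).sum := by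
  induction l with
  | nil => exact ⟨0, zero_mem _, fun _ => rfl⟩
  | cons a l ih =>
    obtain ⟨v, hv, hdv⟩ := ih
    refine ⟨(v, incl l (c a)), ⟨hv, incl_mem_piece (hc a)⟩, fun r => cons_ext ?_ ?_⟩
    · change d r l v + r a • incl l (c a) = incl l (r a • c a + (l.map fun a => r a • c a).sum)
      rw [hdv, smul_incl, ← _root_.map_add, add_comm]
    · change -d r l (incl l (c a)) = 0
      rw [d_incl, neg_zero]

end Differential

end Koszul

namespace Koszul

variable {α β R N : Type*} [CommRing R] [AddCommGroup N] [Module R N]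

theorem exists_homotopy (N : Type*) [AddCommGroup N] [Module R N] (r : α → R) {l : List α}
    {a : α} (ha : a ∈ l) :
    ∃ e : Koszul N l →ₗ[R] Koszul N l, (∀ x, d r l (e x) + e (d r l x) = r a • x) ∧
      ∀ (W : AddSubgroup N) (j : ℤ), ∀ x ∈ piece W l j, e x ∈ piece W l (j + 1) := by
  induction l with
  | nil => exact absurd ha List.not_mem_nil
  | cons b l ih =>
    rcases List.mem_cons.1 ha with rfl | ha
    · refine ⟨LinearMap.prod 0 (LinearMap.fst R _ _), fun x => cons_ext ?_ ?_, fun W j x hx => ?_⟩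
      · change d r l 0 + r a • x.1 + 0 = r a • x.1
        rw [_root_.map_zero, zero_add, add_zero]
      · change -d r l x.1 + (d r l x.1 + r a • x.2) = r a • x.2
        abel
      · exact ⟨zero_mem _, by rw [add_sub_cancel_right]; exact hx.1⟩
    · obtain ⟨e, he, he_mem⟩ := ih ha
      refine ⟨(e.comp (LinearMap.fst R _ _)).prod (-e.comp (LinearMap.snd R _ _)),
        fun x => cons_ext ?_ ?_, fun W j x hx => ⟨he_mem W j _ hx.1, ?_⟩⟩
      · change d r l (e x.1) + r b • -e x.2 + e (d r l x.1 + r b • x.2) = r a • x.1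
        rw [_root_.map_add, _root_.map_smul, smul_neg, ← he]
        abel
      · change -d r l (-e x.2) + -e (-d r l x.2) = r a • x.2
        rw [_root_.map_neg, _root_.map_neg, neg_neg, neg_neg, he]
      · rw [← sub_add_eq_add_sub]
        exact (piece W l _).neg_mem (he_mem W _ _ hx.2)

/-- An isomorphism between two Koszul complexes with the same coefficients, respecting the exterior
degree and the subgroups of coefficients. -/
structure Iso (N : Type*) [AddCommGroup N] [Module R N] (r : α → R) (s : β → R) (l : List α)
    (l' : List β) extends Koszul N l ≃ₗ[R] Koszul N l' where
  map_d : ∀ x, toFun (d r l x) = d s l' (toFun x)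
  mem_piece : ∀ (W : AddSubgroup N) (j : ℤ) x, toFun x ∈ piece W l' j ↔ x ∈ piece W l j

namespace Iso

variable {r : α → R} {s : β → R}

/-- The identity isomorphism. -/
def refl (r : α → R) (l : List α) : Iso N r r l l where
  __ := LinearEquiv.refl R _
  map_d _ := rfl
  mem_piece _ _ _ := Iff.rfl

/-- The composition of isomorphisms. -/
def trans {γ : Type*} {t : γ → R} {l : List α} {l' : List β} {l'' : List γ} (e : Iso N r s l l')
    (e' : Iso N s t l' l'') : Iso N r t l l'' where
  __ := e.toLinearEquiv.trans e'.toLinearEquiv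
  map_d x := (congrArg e'.toFun (e.map_d x)).trans (e'.map_d _)
  mem_piece W j x := (e'.mem_piece W j _).trans (e.mem_piece W j x)

/-- The isomorphism of mapping cones induced by an isomorphism. -/
def cons {l : List α} {l' : List β} (e : Iso N r s l l') {a : α} {b : β} (hab : r a = s b) :
    Iso N r s (a :: l) (b :: l') where
  __ := e.toLinearEquiv.prodCongr e.toLinearEquiv
  map_d x := cons_ext
    (by
      change e.toLinearEquiv (d r l x.1 + r a • x.2) = d s l' (e.toFun x.1) + s b • e.toFun x.2
      rw [_root_.map_add, _root_.map_smul, hab, ← e.map_d]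
      rfl)
    ((_root_.map_neg e.toLinearEquiv _).trans (congrArg Neg.neg (e.map_d x.2)))
  mem_piece W j x := and_congr (e.mem_piece W j x.1) (e.mem_piece W (j - 1) x.2)

/-- The transposition of the first two indices; it changes the sign of `e_a ∧ e_b`. -/
def swap (r : α → R) (a b : α) (l : List α) : Iso N r r (b :: a :: l) (a :: b :: l) where
  __ := (LinearEquiv.prodProdProdComm R (Koszul N l) (Koszul N l) (Koszul N l) (Koszul N l)).trans
    ((LinearEquiv.refl R _).prodCongr ((LinearEquiv.refl R _).prodCongr (LinearEquiv.neg R)))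
  map_d := by
    rintro ⟨⟨x, y⟩, ⟨z, w⟩⟩
    refine cons_ext (cons_ext ?_ ?_) (cons_ext ?_ ?_)
    · change d r l x + r a • y + r b • z = d r l x + r b • z + r a • y
      abel
    · change -(d r l z + r a • w) = -d r l z + r a • -w
      rw [neg_add, smul_neg]
    · change -d r l y + r b • w = -(d r l y + r b • -w)
      rw [neg_add, smul_neg, neg_neg]
    · change - - -d r l w = - -d r l (-w)
      rw [neg_neg, neg_neg, _root_.map_neg]
  mem_piece W j x := by
    change (_ ∧ _) ∧ _ ∧ -x.2.2 ∈ piece W l (j - 1 - 1) ↔ _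
    rw [neg_mem_iff]
    exact and_and_and_comm

theorem nonempty_of_perm (N : Type*) [AddCommGroup N] [Module R N] (r : α → R) {l l' : List α}
    (h : l.Perm l') : Nonempty (Iso N r r l l') := by
  induction h with
  | nil => exact ⟨refl r []⟩
  | cons _ _ ih => exact ih.map fun e => e.cons rfl
  | swap a b l => exact ⟨swap r a b l⟩
  | trans _ _ ih ih' => exact ih.elim fun e => ih'.map e.trans

/-- Indexing by the scalars themselves. -/
def listMap (r : α → R) : (l : List α) → Iso N r id l (l.map r)
  | [] =>
    { LinearEquiv.refl R N with
      map_d := fun _ => rfl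
      mem_piece := fun _ _ _ => Iff.rfl }
  | _ :: l => (listMap r l).cons rfl

end Iso

/-- The homology of the Koszul complex is `M`-torsion in degrees greater than `c`; for `M = ⊥` it
vanishes there. -/
def IsTorsionAbove (N : Type*) [AddCommGroup N] [Module R N] (M : Submonoid R) (r : α → R)
    (l : List α) (c : ℤ) : Prop :=
  ∀ i > c, ∀ z ∈ piece (⊤ : AddSubgroup N) l i, d r l z = 0 →
    ∃ s ∈ M, ∃ w ∈ piece (⊤ : AddSubgroup N) l (i + 1), d r l w = s • z

theorem smul_mem_piece_top (s : R) {l : List α} {j : ℤ} {x : Koszul N l}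
    (hx : x ∈ piece ⊤ l j) : s • x ∈ piece ⊤ l j :=
  smul_mem_piece (fun _ _ => AddSubgroup.mem_top _) hx

namespace IsTorsionAbove

variable {M : Submonoid R} {r : α → R} {s : β → R} {l : List α} {c : ℤ}

theorem of_length_le (M : Submonoid R) (r : α → R) (h : l.length ≤ c) :
    IsTorsionAbove N M r l c := fun i hi z hz _ =>
  ⟨1, M.one_mem, 0, zero_mem _, by
    rw [eq_zero_of_length_lt (h.trans_lt hi) hz, smul_zero, _root_.map_zero]⟩

theorem of_iso {l' : List β} (h : IsTorsionAbove N M s l' c) (e : Iso N r s l l') :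
    IsTorsionAbove N M r l c := by
  intro i hi z hz hdz
  obtain ⟨t, ht, w, hw, hdw⟩ := h i hi (e.toFun z) ((e.mem_piece _ _ _).2 hz)
    (by rw [← e.map_d, hdz]; exact _root_.map_zero e.toLinearEquiv)
  obtain ⟨v, rfl⟩ := e.toLinearEquiv.surjective w
  refine ⟨t, ht, v, (e.mem_piece _ _ _).1 hw, e.toLinearEquiv.injective ?_⟩
  exact (e.map_d v).trans (hdw.trans (_root_.map_smul e.toLinearEquiv t z).symm)

/-- In the long exact sequence of the mapping cone a class of the cone is torsion as soon as its
image `y` in the homology of the quotient complex is. -/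
theorem exists_d_cons_eq (h : IsTorsionAbove N M r l c) {a : α} {i : ℤ} (hi : c < i)
    {x y : Koszul N l} (hx : x ∈ piece ⊤ l i) (hxy : d r l x + r a • y = 0)
    (hy : ∃ s ∈ M, ∃ w ∈ piece (⊤ : AddSubgroup N) l i, d r l w = s • y) :
    ∃ s ∈ M, ∃ w ∈ piece (⊤ : AddSubgroup N) (a :: l) (i + 1),
      d r (a :: l) w = s • ((x, y) : Koszul N (a :: l)) := by
  obtain ⟨s, hs, w, hw, hdw⟩ := hy
  have h_cycle : d r l (s • x + r a • w) = 0 := by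
    rw [_root_.map_add, _root_.map_smul, _root_.map_smul, hdw, smul_comm (r a), ← smul_add, hxy,
      smul_zero]
  obtain ⟨t, ht, v, hv, hdv⟩ := h i hi _
    (add_mem (smul_mem_piece_top s hx) (smul_mem_piece_top (r a) hw)) h_cycle
  refine ⟨t * s, M.mul_mem ht hs, (v, -(t • w)), ⟨hv, ?_⟩, cons_ext ?_ ?_⟩
  · rw [add_sub_cancel_right]
    exact (piece ⊤ l i).neg_mem (smul_mem_piece_top t hw)
  · change d r l v + r a • -(t • w) = (t * s) • x
    rw [hdv, smul_neg, smul_comm (r a), ← smul_neg, ← smul_add, add_neg_cancel_right, mul_smul]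
  · change -d r l (-(t • w)) = (t * s) • y
    rw [_root_.map_neg, neg_neg, _root_.map_smul, hdw, mul_smul]

theorem cons (h : IsTorsionAbove N M r l c) (a : α) : IsTorsionAbove N M r (a :: l) (c + 1) := by
  rintro i hi ⟨x, y⟩ hz hd
  refine h.exists_d_cons_eq (by lia) hz.1 (Prod.ext_iff.1 hd).1 ?_
  have hy := h (i - 1) (by lia) y hz.2 (neg_eq_zero.1 (Prod.ext_iff.1 hd).2)
  rwa [sub_add_cancel] at hy

theorem append (h : IsTorsionAbove N M r l c) (l' : List α) :
    IsTorsionAbove N M r (l' ++ l) (c + l'.length) := by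
  induction l' with
  | nil => simpa using h
  | cons a l' ih => simpa [add_assoc] using ih.cons a

end IsTorsionAbove

end Koszul

/-! ### Depth sensitivity -/

namespace Koszul

section HomologyAnnihilator

variable {α R N : Type*} [CommRing R] [AddCommGroup N] [Module R N]

/-- `P` is the annihilator of the class of some cycle in the `q`-th Koszul homology. -/
def IsHomologyAnnihilator (N : Type*) [AddCommGroup N] [Module R N] (r : α → R) (l : List α)
    (q : ℤ) (P : Ideal R) : Prop :=
  ∃ u ∈ piece (⊤ : AddSubgroup N) l q, d r l u = 0 ∧
    ∀ s, s ∈ P ↔ ∃ w ∈ piece (⊤ : AddSubgroup N) l (q + 1), d r l w = s • u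

theorem exists_isHomologyAnnihilator [IsNoetherianRing R] {r : α → R} {l : List α} {q : ℤ}
    {u : Koszul N l} (hu : u ∈ piece ⊤ l q) (hdu : d r l u = 0)
    (h : ¬ ∃ w ∈ piece (⊤ : AddSubgroup N) l (q + 1), d r l w = u) :
    ∃ P : Ideal R, P.IsPrime ∧ IsHomologyAnnihilator N r l q P := by
  let pieceTop (j : ℤ) : Submodule R (Koszul N l) :=
    { piece ⊤ l j with smul_mem' := fun s _ => smul_mem_piece_top s }
  let boundaries := (pieceTop (q + 1)).map (d r l)
  let homology := (pieceTop q ⊓ LinearMap.ker (d r l)).map boundaries.mkQ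
  have hu_ne : (⟨_, Submodule.mem_map_of_mem ⟨hu, hdu⟩⟩ : homology) ≠ 0 := fun h0 =>
    h ((Submodule.Quotient.mk_eq_zero boundaries).1 (congrArg Subtype.val h0))
  obtain ⟨P, hP, -⟩ := exists_le_isAssociatedPrime_of_isNoetherianRing R _ hu_ne
  obtain ⟨hP_prime, ⟨_, v, ⟨hv, hdv⟩, rfl⟩, rfl⟩ := isAssociatedPrime_iff.1 hP
  refine ⟨_, hP_prime, v, hv, hdv, fun s => ?_⟩
  rw [Submodule.mem_colon_singleton, Submodule.mem_bot, Subtype.ext_iff]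
  exact Submodule.Quotient.mk_eq_zero boundaries

namespace IsHomologyAnnihilator

variable {r : α → R} {l : List α} {q : ℤ} {P : Ideal R}

theorem mem (h : IsHomologyAnnihilator N r l q P) {a : α} (ha : a ∈ l) : r a ∈ P := by
  obtain ⟨u, hu, hdu, hP⟩ := h
  obtain ⟨e, he, he_mem⟩ := exists_homotopy N r ha
  refine (hP (r a)).2 ⟨e u, he_mem _ _ u hu, ?_⟩
  rw [← he, hdu, _root_.map_zero, add_zero]

/-- A class `u` annihilated by `r a` lifts along the connecting map `H_{q+1}(a :: l) → H_q(l)`, and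
the vanishing of `H_{q+1}(l)` makes this map injective. -/
theorem cons (h : IsHomologyAnnihilator N r l q P) (hl : IsTorsionAbove N ⊥ r l q) {a : α}
    (ha : r a ∈ P) : IsHomologyAnnihilator N r (a :: l) (q + 1) P := by
  obtain ⟨u, hu, hdu, hP⟩ := h
  obtain ⟨w, hw, hdw⟩ := (hP _).1 ha
  refine ⟨(-w, u), ⟨(piece ⊤ l _).neg_mem hw, by rwa [add_sub_cancel_right]⟩, cons_ext ?_ ?_,
    fun s => (hP s).trans ⟨?_, ?_⟩⟩
  · change d r l (-w) + r a • u = 0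
    rw [_root_.map_neg, hdw, neg_add_cancel]
  · exact neg_eq_zero.2 hdu
  · rintro ⟨v, hv, hdv⟩
    obtain ⟨t, ht, h_eq⟩ := hl.exists_d_cons_eq (a := a) (x := s • -w) (y := s • u)
      (by lia) (smul_mem_piece_top s ((piece ⊤ l _).neg_mem hw)) (by
        rw [_root_.map_smul, _root_.map_neg, hdw, smul_neg, smul_comm, neg_add_cancel])
      ⟨1, Submonoid.one_mem _, v, hv, by rw [hdv, one_smul]⟩
    rw [Submonoid.mem_bot.1 ht, one_smul] at h_eq
    exact h_eq
  · rintro ⟨⟨x, y⟩, hxy, h_eq⟩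
    have hy : y ∈ piece ⊤ l (q + 1 + 1 - 1) := hxy.2
    rw [add_sub_cancel_right] at hy
    refine ⟨-y, (piece ⊤ l _).neg_mem hy, ?_⟩
    rw [_root_.map_neg]
    exact (Prod.ext_iff.1 h_eq).2

theorem append (h : IsHomologyAnnihilator N r l q P) (hl : IsTorsionAbove N ⊥ r l q) {g : List α}
    (hg : ∀ a ∈ g, r a ∈ P) : IsHomologyAnnihilator N r (g ++ l) (q + g.length) P := by
  induction g with
  | nil => simpa using h
  | cons a g ih =>
    rw [List.forall_mem_cons] at hg
    simpa [add_assoc] using (ih hg.2).cons (hl.append g) hg.1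

end IsHomologyAnnihilator

end HomologyAnnihilator

end Koszul

/-- A list of elements that becomes a weakly regular sequence (in reverse order) in the localization
at `M`. -/
def IsLocallyRegular {B : Type*} [CommRing B] (M : Submonoid B) : List B → Prop
  | [] => True
  | a :: l => IsLocallyRegular M l ∧
      ∀ b, a * b ∈ Ideal.ofList l → ∃ s ∈ M, s * b ∈ Ideal.ofList l

namespace Koszul

variable {B : Type*} [CommRing B]

theorem exists_d_eq_incl {l : List B} {b : B} (hb : b ∈ Ideal.ofList l) :
    ∃ w ∈ piece (⊤ : AddSubgroup B) l 1, d id l w = incl l b := by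
  induction hb using Submodule.span_induction with
  | mem x hx =>
    obtain ⟨e, he, he_mem⟩ := exists_homotopy B (id : B → B) hx
    refine ⟨e (incl l 1), he_mem ⊤ 0 _ (incl_mem_piece (AddSubgroup.mem_top _)), ?_⟩
    have h_eq := he (incl l 1)
    rwa [d_incl, _root_.map_zero, add_zero, smul_incl, smul_eq_mul, id_eq, mul_one] at h_eq
  | zero => exact ⟨0, zero_mem _, by rw [_root_.map_zero, _root_.map_zero]⟩
  | add x y _ _ hx hy =>
    obtain ⟨u, hu, hdu⟩ := hx
    obtain ⟨v, hv, hdv⟩ := hy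
    exact ⟨u + v, add_mem hu hv, by rw [_root_.map_add, hdu, hdv, _root_.map_add]⟩
  | smul a x _ hx =>
    obtain ⟨u, hu, hdu⟩ := hx
    exact ⟨a • u, smul_mem_piece_top a hu, by rw [_root_.map_smul, hdu, smul_incl]⟩

theorem proj_d_mem {l : List B} {x : Koszul B l} (hx : x ∈ piece ⊤ l 1) :
    proj l (d id l x) ∈ Ideal.ofList l := by
  have hd : d id l x ∈ piece (Ideal.ofList l).toAddSubgroup l (1 - 1) :=
    d_mem_piece (fun _ ha b _ => (Ideal.ofList l).mul_mem_right b (Ideal.subset_span ha)) hx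
  rw [sub_self] at hd
  exact proj_mem hd

end Koszul

theorem IsLocallyRegular.isTorsionAbove {B : Type*} [CommRing B] {M : Submonoid B} {l : List B}
    (h : IsLocallyRegular M l) : Koszul.IsTorsionAbove B M id l 0 := by
  induction l with
  | nil => exact .of_length_le M id le_rfl
  | cons a l ih =>
    rintro i hi ⟨x, y⟩ hz hd
    rcases (Int.add_one_le_iff.2 hi).eq_or_lt with rfl | hi
    · have hx : x ∈ Koszul.piece ⊤ l 1 := hz.1
      have hy : y ∈ Koszul.piece ⊤ l 0 := hz.2
      have hxy : Koszul.d id l x + a • y = 0 := (Prod.ext_iff.1 hd).1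
      have h_proj : a * Koszul.proj l y ∈ Ideal.ofList l := by
        rw [← neg_mem_iff, ← smul_eq_mul, ← Koszul.proj_smul, ← _root_.map_neg,
          ← eq_neg_of_add_eq_zero_left hxy]
        exact Koszul.proj_d_mem hx
      obtain ⟨s, hs, hsy⟩ := h.2 _ h_proj
      obtain ⟨w, hw, hdw⟩ := Koszul.exists_d_eq_incl hsy
      refine (ih h.1).exists_d_cons_eq one_pos hx hxy ⟨s, hs, w, hw, ?_⟩
      rw [hdw, ← smul_eq_mul, ← Koszul.smul_incl, Koszul.incl_proj hy]
    · exact (ih h.1).cons a i hi (x, y) hz hd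

namespace Koszul.IsTorsionAbove

variable {B : Type*} [CommRing B] [IsNoetherianRing B] {l : List B} {c : ℤ}

/-- If `H_{c+1}(l) ≠ 0`, take an associated prime `P` of it. Adjoining a locally regular `g ⊆ P`
moves the class with annihilator `P` to degree `c + 1 + |g|`, whereas `H_i(g ++ l)` is
locally zero at `P` for `i > |l|`. -/
theorem of_add_one
    (hreg : ∀ P : Ideal B, ∀ _ : P.IsPrime, (∀ a ∈ l, a ∈ P) →
      ∃ g : List B, (∀ a ∈ g, a ∈ P) ∧ IsLocallyRegular P.primeCompl g ∧ l.length ≤ g.length + c)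
    (h : IsTorsionAbove B ⊥ id l (c + 1)) : IsTorsionAbove B ⊥ id l c := by
  intro i hi z hz hdz
  rcases (Int.add_one_le_iff.2 hi).eq_or_lt with rfl | hi
  · by_contra h_not
    obtain ⟨P, hP, h_ann⟩ := exists_isHomologyAnnihilator hz hdz fun ⟨w, hw, hdw⟩ =>
      h_not ⟨1, Submonoid.one_mem _, w, hw, by rw [hdw, one_smul]⟩
    obtain ⟨g, hg, hg_reg, h_len⟩ := hreg P hP fun a => h_ann.mem
    obtain ⟨u, hu, hdu, hP_iff⟩ := h_ann.append h hg
    obtain ⟨e⟩ := Iso.nonempty_of_perm B (id : B → B) (List.perm_append_comm (l₁ := g) (l₂ := l))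
    obtain ⟨s, hs, h_bd⟩ := (hg_reg.isTorsionAbove.append l).of_iso e _ (by lia) u hu hdu
    exact hs ((hP_iff s).2 h_bd)
  · exact h i hi z hz hdz

theorem of_exists_isLocallyRegular
    (hreg : ∀ P : Ideal B, ∀ _ : P.IsPrime, (∀ a ∈ l, a ∈ P) →
      ∃ g : List B, (∀ a ∈ g, a ∈ P) ∧ IsLocallyRegular P.primeCompl g ∧ l.length ≤ g.length + c) :
    IsTorsionAbove B ⊥ id l c := by
  rcases le_total (l.length : ℤ) c with hc | hc
  · exact of_length_le ⊥ id hc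
  · refine Int.leInductionDown (m := l.length)
      (motive := fun n _ => c ≤ n → IsTorsionAbove B ⊥ id l n) (fun _ => of_length_le ⊥ id le_rfl)
      (fun n _ ih hcn => of_add_one (fun P hP hlP => ?_) ?_) c hc le_rfl
    · obtain ⟨g, hg, hg_reg, h_len⟩ := hreg P hP hlP
      exact ⟨g, hg, hg_reg, by lia⟩
    · rw [sub_add_cancel]
      exact ih (by lia)

end Koszul.IsTorsionAbove

/-! ### Cohen–Macaulay rings -/

section Flat

variable {A B : Type*} [CommRing A] [CommRing B]

theorem mem_map_colon_singleton_of_flat [Algebra A B] [Module.Flat A B] {I : Ideal A} {a : A}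
    {b : B} (h : a • b ∈ I.map (algebraMap A B)) : b ∈ (I.colon {a}).map (algebraMap A B) := by
  obtain ⟨t, htI, c, hc⟩ := (Submodule.mem_span_image_iff_exists_fun B).1 h
  have h_rel : ∑ i : Option t, i.elim a (fun i => -(i : A)) • i.elim b c = 0 := by
    simp only [Fintype.sum_option, Option.elim_none, Option.elim_some]
    rw [← hc, ← Finset.sum_add_distrib]
    refine Finset.sum_eq_zero fun i _ => ?_
    rw [neg_smul, smul_eq_mul, mul_comm, Algebra.smul_def, add_neg_cancel]
  obtain ⟨k, α, y, hx, hα⟩ := Module.Flat.isTrivialRelation_of_sum_smul_eq_zero (R := A) (M := B)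
    (f := fun i : Option t => i.elim a fun i => -(i : A)) (x := fun i => i.elim b c) h_rel
  rw [show b = ∑ j, α none j • y j from hx none]
  refine Ideal.sum_mem _ fun j _ => ?_
  rw [Algebra.smul_def]
  refine Ideal.mul_mem_right _ _ (Ideal.mem_map_of_mem _ (Submodule.mem_colon_singleton.2 ?_))
  have hαj := hα j
  simp only [Fintype.sum_option, Option.elim_none, Option.elim_some, neg_mul,
    Finset.sum_neg_distrib, add_neg_eq_zero] at hαj
  rw [smul_eq_mul, mul_comm, hαj]
  exact Ideal.sum_mem _ fun i _ => Ideal.mul_mem_right _ _ (htI i.2)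

theorem IsLocallyRegular.map_of_flat {φ : A →+* B} (hφ : φ.Flat) {M : Submonoid A}
    {M' : Submonoid B} (hM : ∀ s ∈ M, φ s ∈ M') {l : List A} (h : IsLocallyRegular M l) :
    IsLocallyRegular M' (l.map φ) := by
  algebraize [φ]
  induction l with
  | nil => trivial
  | cons a l ih =>
    refine ⟨ih h.1, fun b hb => ?_⟩
    rw [← Ideal.map_ofList] at hb ⊢
    replace hb := mem_map_colon_singleton_of_flat (A := A) (Algebra.smul_def a b ▸ hb)
    induction hb using Submodule.span_induction with
    | mem _ hx =>
      obtain ⟨c, hc, rfl⟩ := hx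
      rw [SetLike.mem_coe, Submodule.mem_colon_singleton, smul_eq_mul, mul_comm] at hc
      obtain ⟨s, hs, hsc⟩ := h.2 c hc
      exact ⟨φ s, hM s hs, _root_.map_mul φ s c ▸ Ideal.mem_map_of_mem φ hsc⟩
    | zero => exact ⟨1, M'.one_mem, by simp⟩
    | add x y _ _ hx hy =>
      obtain ⟨s, hs, hsx⟩ := hx
      obtain ⟨t, ht, hty⟩ := hy
      refine ⟨s * t, M'.mul_mem hs ht, ?_⟩
      rw [mul_add, mul_right_comm, mul_assoc s t]
      exact add_mem (Ideal.mul_mem_right _ _ hsx) (Ideal.mul_mem_left _ _ hty)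
    | smul c x _ hx =>
      obtain ⟨s, hs, hsx⟩ := hx
      exact ⟨s, hs, by rw [smul_eq_mul, mul_left_comm]; exact Ideal.mul_mem_left _ _ hsx⟩

end Flat

/-- For every prime ideal `P` there is a system of parameters at `P` that is locally a weakly
regular sequence; a Noetherian ring has this property if and only if it is Cohen–Macaulay. -/
def IsCohenMacaulay (B : Type*) [CommRing B] : Prop :=
  ∀ P : Ideal B, ∀ _ : P.IsPrime,
    ∃ g : List B, IsLocallyRegular P.primeCompl g ∧ P ∈ (Ideal.ofList g).minimalPrimes

section Polynomial

open Polynomial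

variable {A : Type*} [CommRing A]

theorem exists_leadingCoeff_pow_mul_mem_map_C {J : Ideal A} {G b : A[X]}
    (h : G * b ∈ J.map C) : ∃ k, C (G.leadingCoeff ^ k) * b ∈ J.map C := by
  induction hn : b.support.card using Nat.strong_induction_on generalizing b with
  | _ n ih =>
    subst hn
    rcases eq_or_ne b 0 with rfl | hb
    · exact ⟨0, by rw [mul_zero]; exact zero_mem _⟩
    have h_lead : C (G.leadingCoeff * b.leadingCoeff) * X ^ b.natDegree ∈ J.map C := by
      refine Ideal.mul_mem_right _ _ (Ideal.mem_map_of_mem _ ?_)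
      rw [← coeff_mul_degree_add_degree]
      exact Ideal.mem_map_C_iff.1 h _
    have h_split : C G.leadingCoeff * b =
        C G.leadingCoeff * b.eraseLead + C (G.leadingCoeff * b.leadingCoeff) * X ^ b.natDegree := by
      rw [C_mul, mul_assoc, ← mul_add, eraseLead_add_C_mul_X_pow]
    have h_erase : G * (C G.leadingCoeff * b.eraseLead) ∈ J.map C := by
      rw [eq_sub_of_add_eq h_split.symm, mul_sub, mul_left_comm]
      exact sub_mem (Ideal.mul_mem_left _ _ h) (Ideal.mul_mem_left _ _ h_lead)
    have h_card : (C G.leadingCoeff * b.eraseLead).support.card < b.support.card :=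
      (Finset.card_le_card fun i hi => mem_support_iff.2 (right_ne_zero_of_mul
        (by rwa [mem_support_iff, coeff_C_mul] at hi))).trans_lt (eraseLead_support_card_lt hb)
    obtain ⟨k, hk⟩ := ih _ h_card h_erase rfl
    refine ⟨k + 1, ?_⟩
    rw [pow_succ, C_mul, mul_assoc, h_split, mul_add]
    exact add_mem hk (Ideal.mul_mem_left _ _ h_lead)

/-- Division with remainder modulo `J`, up to denominators outside `P`. -/
theorem exists_C_mul_mem {P J : Ideal A[X]} (hCJ : (P.comap C).map C ≤ J) (hJP : J ≤ P)
    [P.IsPrime] (h_step : ∀ h ∈ P, h.leadingCoeff ∉ P.comap C →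
      ∃ s ∉ P.comap C, ∃ j ∈ J, (C s * h - j).natDegree < h.natDegree)
    {h : A[X]} (hh : h ∈ P) : ∃ s ∉ P.comap C, C s * h ∈ J := by
  induction hn : h.natDegree using Nat.strong_induction_on generalizing h with
  | _ n ih =>
    subst hn
    have h_reduce : ∃ s ∉ P.comap C, ∃ j ∈ J,
        C s * h = j ∨ (C s * h - j).natDegree < h.natDegree := by
      by_cases h_lead : h.leadingCoeff ∈ P.comap C
      · have h_mem : C h.leadingCoeff * X ^ h.natDegree ∈ J :=
          hCJ (Ideal.mul_mem_right _ _ (Ideal.mem_map_of_mem _ h_lead))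
        refine ⟨1, (Ideal.ne_top_iff_one _).1 (Ideal.IsPrime.ne_top inferInstance), _, h_mem, ?_⟩
        rw [C_1, one_mul, self_sub_C_mul_X_pow, ← sub_eq_zero, self_sub_C_mul_X_pow]
        exact h.eraseLead_natDegree_lt_or_eraseLead_eq_zero.symm
      · obtain ⟨s, hs, j, hj, h_lt⟩ := h_step h hh h_lead
        exact ⟨s, hs, j, hj, Or.inr h_lt⟩
    obtain ⟨s, hs, j, hj, h_eq | h_lt⟩ := h_reduce
    · exact ⟨s, hs, h_eq ▸ hj⟩
    · obtain ⟨t, ht, htJ⟩ := ih _ h_lt (sub_mem (Ideal.mul_mem_left _ _ hh) (hJP hj)) rfl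
      refine ⟨t * s, fun hts => (Ideal.IsPrime.mem_or_mem inferInstance hts).elim ht hs, ?_⟩
      rw [C_mul, mul_assoc, ← sub_add_cancel (C s * h) j, mul_add]
      exact add_mem htJ (Ideal.mul_mem_left _ _ hj)

theorem mem_minimalPrimes_sup_map_C {P J : Ideal A[X]} [P.IsPrime] {I : Ideal A}
    (hI : P.comap C ∈ I.minimalPrimes) (hJP : J ≤ P)
    (h_step : ∀ h ∈ P, h.leadingCoeff ∉ P.comap C →
      ∃ s ∉ P.comap C, ∃ j ∈ J, (C s * h - j).natDegree < h.natDegree) :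
    P ∈ (J ⊔ I.map C).minimalPrimes := by
  refine ⟨⟨inferInstance, sup_le hJP (Ideal.map_le_iff_le_comap.2 hI.1.2)⟩,
    fun Q ⟨hQ, hIQ⟩ hQP h hh => ?_⟩
  have h_comap : P.comap C ≤ Q.comap C :=
    hI.2 ⟨inferInstance, Ideal.map_le_iff_le_comap.1 (le_sup_right.trans hIQ)⟩
      (Ideal.comap_mono hQP)
  obtain ⟨s, hs, hsh⟩ := exists_C_mul_mem (J := J ⊔ (P.comap C).map C) le_sup_right
    (sup_le hJP Ideal.map_comap_le) (fun h hh h_lead => by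
      obtain ⟨s, hs, j, hj, h_lt⟩ := h_step h hh h_lead
      exact ⟨s, hs, j, Ideal.mem_sup_left hj, h_lt⟩) hh
  have hsQ : C s * h ∈ Q :=
    sup_le (le_sup_left.trans hIQ) (Ideal.map_le_iff_le_comap.2 h_comap) hsh
  exact (hQ.mem_or_mem hsQ).resolve_left fun h => hs (hQP h)

theorem exists_natDegree_sub_lt {P : Ideal A[X]} {G : A[X]}
    (hG_lead : G.leadingCoeff ∉ P.comap C) {h : A[X]} (hh : h ∈ P)
    (hh_lead : h.leadingCoeff ∉ P.comap C) (h_le : G.natDegree ≤ h.natDegree) :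
    ∃ s ∉ P.comap C, ∃ j ∈ Ideal.span {G}, (C s * h - j).natDegree < h.natDegree := by
  have h_pos : 0 < h.natDegree := by
    refine Nat.pos_of_ne_zero fun h0 => hh_lead ?_
    rwa [Ideal.mem_comap, Polynomial.leadingCoeff, h0, ← eq_C_of_natDegree_eq_zero h0]
  refine ⟨G.leadingCoeff, hG_lead, _, Ideal.mul_mem_left _ (C h.leadingCoeff *
    X ^ (h.natDegree - G.natDegree)) (Ideal.mem_span_singleton_self G), ?_⟩
  have h_cancel := natDegree_cancelLeads_lt_of_natDegree_le_natDegree h_le h_pos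
  rwa [cancelLeads, Nat.sub_eq_zero_of_le h_le, pow_zero, mul_one] at h_cancel

/-- Over a prime `p` of `A` a prime of `A[X]` is either `p A[X]`, or has one more parameter: an
element of minimal degree among those whose leading coefficient is not in `p`. -/
theorem IsCohenMacaulay.polynomial (hA : IsCohenMacaulay A) : IsCohenMacaulay A[X] := by
  intro P hP
  obtain ⟨g, hg, hg_min⟩ := hA (P.comap C) inferInstance
  have hg_map : IsLocallyRegular P.primeCompl (g.map C) :=
    hg.map_of_flat (φ := C)
      (RingHom.flat_algebraMap_iff.2 inferInstance : (algebraMap A A[X]).Flat) fun _ hs => hs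
  by_cases h_all : ∀ h ∈ P, h.leadingCoeff ∈ P.comap C
  · refine ⟨g.map C, hg_map, ?_⟩
    rw [← Ideal.map_ofList, ← bot_sup_eq (Ideal.map C _)]
    exact mem_minimalPrimes_sup_map_C hg_min bot_le fun h hh h_lead => absurd (h_all h hh) h_lead
  · push Not at h_all
    obtain ⟨G, ⟨hG, hG_lead⟩, h_min⟩ := exists_minimalFor_of_wellFoundedLT
      (fun h => h ∈ P ∧ h.leadingCoeff ∉ P.comap C) natDegree h_all
    refine ⟨G :: g.map C, ⟨hg_map, fun b hb => ?_⟩, ?_⟩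
    · rw [← Ideal.map_ofList] at hb ⊢
      obtain ⟨k, hk⟩ := exists_leadingCoeff_pow_mul_mem_map_C hb
      exact ⟨_, fun h => hG_lead ((inferInstance : (P.comap C).IsPrime).mem_of_pow_mem k h), hk⟩
    · rw [Ideal.ofList_cons, ← Ideal.map_ofList]
      refine mem_minimalPrimes_sup_map_C hg_min ((Ideal.span_singleton_le_iff_mem P).2 hG)
        fun h hh hh_lead => exists_natDegree_sub_lt hG_lead hh hh_lead ?_
      exact (le_total _ _).elim id (h_min ⟨hh, hh_lead⟩)

end Polynomial

namespace IsCohenMacaulay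

theorem of_ringEquiv {A B : Type*} [CommRing A] [CommRing B] (e : A ≃+* B)
    (hA : IsCohenMacaulay A) : IsCohenMacaulay B := by
  intro P hP
  obtain ⟨g, hg, hg_min⟩ := hA (P.comap (e : A →+* B)) inferInstance
  refine ⟨g.map (e : A →+* B), hg.map_of_flat (.of_bijective e.bijective) fun _ hs => hs, ?_⟩
  rw [← Ideal.map_ofList, Ideal.minimalPrimes_map_of_surjective e.surjective,
    (RingHom.injective_iff_ker_eq_bot (e : A →+* B)).1 e.injective, sup_bot_eq]
  exact ⟨_, hg_min, Ideal.map_comap_of_surjective _ e.surjective P⟩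

theorem field (K : Type*) [Field K] : IsCohenMacaulay K := fun P hP =>
  ⟨[], trivial, ⟨hP, by simp⟩, fun Q _ _ => by
    rw [(Ideal.eq_bot_or_top P).resolve_right hP.ne_top]
    exact bot_le⟩

theorem mvPolynomial_fin {A : Type*} [CommRing A] (hA : IsCohenMacaulay A) (m : ℕ) :
    IsCohenMacaulay (MvPolynomial (Fin m) A) := by
  induction m with
  | zero => exact hA.of_ringEquiv (MvPolynomial.isEmptyRingEquiv A (Fin 0)).symm
  | succ m ih => exact ih.polynomial.of_ringEquiv (MvPolynomial.finSuccEquiv A m).symm.toRingEquiv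

end IsCohenMacaulay

theorem Koszul.isTorsionAbove_one_of_le_height {B : Type*} [CommRing B] [IsNoetherianRing B]
    (hB : IsCohenMacaulay B) {n : ℕ} (f : Fin (n + 1) → B)
    (h : ∀ P : Ideal B, ∀ [P.IsPrime], Ideal.span (Set.range f) ≤ P → n ≤ P.height) :
    IsTorsionAbove B ⊥ f (List.finRange (n + 1)) 1 := by
  refine (IsTorsionAbove.of_exists_isLocallyRegular fun P hP hfP => ?_).of_iso
    (Iso.listMap f (List.finRange (n + 1)))
  obtain ⟨g, hg, hg_min⟩ := hB P hP
  have h_span : Ideal.span (Set.range f) ≤ P := by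
    rw [Ideal.span_le]
    rintro _ ⟨j, rfl⟩
    exact hfP _ (List.mem_map_of_mem (List.mem_finRange j))
  classical
  have h_len : (n : ℕ∞) ≤ g.length := (h P h_span).trans <|
    (Ideal.height_le_card_of_mem_minimalPrimes_span_finset (s := g.toFinset)
      (by simpa using hg_min)).trans (Nat.cast_le.2 g.toFinset_card_le)
  refine ⟨g, fun a ha => hg_min.1.2 (Ideal.subset_span ha), hg, ?_⟩
  rw [List.length_map, List.length_finRange]
  exact_mod_cast Nat.succ_le_succ (Nat.cast_le.1 h_len)

/-! ### Graded Koszul homology -/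

namespace Koszul

variable {α R N N' : Type*} [CommRing R] [AddCommGroup N'] [Module R N']
  [AddCommGroup N] [Module R N]

/-- The homology of exterior degree `j` of the Koszul complex on `r`, with coefficients in the
graded module with pieces `P b`, vanishes where the coefficients have degree greater than `c`.
When `r` consists of the variables of a polynomial ring, this holds for every `j` if and only if
the regularity of the module is at most `c`. -/
def VanishesAbove (r : α → R) (l : List α) (P : ℤ → AddSubgroup N) (c j : ℤ) : Prop :=
  ∀ b > c, ∀ z ∈ piece (P b) l j, d r l z = 0 → ∃ w ∈ piece (P (b - 1)) l (j + 1), d r l w = z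

namespace VanishesAbove

variable {r : α → R} {l : List α} {P : ℤ → AddSubgroup N} {c j : ℤ}

theorem of_neg (r : α → R) (l : List α) (P : ℤ → AddSubgroup N) (c : ℤ) (hj : j < 0) :
    VanishesAbove r l P c j := fun b _ z hz _ =>
  ⟨0, zero_mem _, by rw [eq_zero_of_neg hj hz, _root_.map_zero]⟩

variable {g : N →+ N'}

theorem map (hP : ∀ a ∈ l, ∀ b, ∀ x ∈ P b, r a • x ∈ P (b + 1))
    (hg : ∀ a ∈ l, ∀ x, g (r a • x) = r a • g x) (h : VanishesAbove r l P c j)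
    (h_ker : VanishesAbove r l (fun b => P b ⊓ g.ker) (c + 1) (j - 1)) :
    VanishesAbove r l (fun b => (P b).map g) c j := by
  intro b hb z hz hdz
  obtain ⟨x, hx, rfl⟩ := exists_map_eq hz
  have hdx : d r l x ∈ piece (P (b + 1) ⊓ g.ker) l (j - 1) :=
    mem_piece_inf_ker.2 ⟨d_mem_piece (fun a ha => hP a ha b) hx, by rw [map_d hg, hdz]⟩
  obtain ⟨w, hw, hdw⟩ := h_ker (b + 1) (by lia) _ hdx (d_d r l x)
  rw [add_sub_cancel_right, sub_add_cancel, mem_piece_inf_ker] at hw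
  obtain ⟨v, hv, hdv⟩ := h b hb (x - w) (sub_mem hx hw.1) (by rw [_root_.map_sub, hdw, sub_self])
  refine ⟨Koszul.map g l v, map_mem_piece (fun y hy => AddSubgroup.mem_map_of_mem g hy) hv, ?_⟩
  rw [← map_d hg, hdv, _root_.map_sub, hw.2, sub_zero]

theorem inf_ker (hP : ∀ a ∈ l, ∀ b, ∀ x ∈ P b, r a • x ∈ P (b + 1))
    (hg : ∀ a ∈ l, ∀ x, g (r a • x) = r a • g x) (h : VanishesAbove r l P (c + 1) j)
    (h_map : VanishesAbove r l (fun b => (P b).map g) c (j + 1)) :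
    VanishesAbove r l (fun b => P b ⊓ g.ker) (c + 1) j := by
  intro b hb z hz hdz
  obtain ⟨hzP, hgz⟩ := mem_piece_inf_ker.1 hz
  obtain ⟨w, hw, rfl⟩ := h b hb z hzP hdz
  obtain ⟨u, hu, hdu⟩ := h_map (b - 1) (by lia) (Koszul.map g l w)
    (map_mem_piece (fun y hy => AddSubgroup.mem_map_of_mem g hy) hw) (by rw [← map_d hg, hgz])
  obtain ⟨v, hv, rfl⟩ := exists_map_eq hu
  have hdv : d r l v ∈ piece (P (b - 1)) l (j + 1) := by
    have hdv := d_mem_piece (W' := P (b - 1 - 1 + 1)) (fun a ha => hP a ha _) hv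
    rwa [sub_add_cancel, add_sub_cancel_right] at hdv
  refine ⟨w - d r l v, mem_piece_inf_ker.2 ⟨sub_mem hw hdv, ?_⟩, ?_⟩
  · rw [_root_.map_sub, map_d hg, hdu, sub_self]
  · rw [_root_.map_sub, d_d, sub_zero]

end VanishesAbove

/-- The operators `t a` divide by the scalars `r a` and discard remainders, as if the `r a` were
independent variables. -/
structure IsDivision (r : α → R) (t : α → N →+ N) : Prop where
  div_smul : ∀ a x, t a (r a • x) = x
  div_smul_of_ne : ∀ a b, a ≠ b → ∀ x, t a (r b • x) = r b • t a x
  div_comm : ∀ a b x, t a (t b x) = t b (t a x)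

namespace IsDivision

variable {r : α → R} {t : α → N →+ N}

theorem koszul (h : IsDivision r t) {β : Type*} (l : List β) :
    IsDivision r fun a => map (t a) l where
  div_smul a x := by
    rw [smul_eq_map, map_map]
    exact (congrArg (map · l x) (AddMonoidHom.ext (h.div_smul a))).trans (map_id l x)
  div_smul_of_ne a b hab x := map_smul (h.div_smul_of_ne a b hab) l x
  div_comm a b x := by
    rw [map_map, map_map]
    exact congrArg (map · l x) (AddMonoidHom.ext (h.div_comm a b))

/-- A cycle is replaced by a homologous one without `e_a` and without coefficients divisible by
`r a`, one index `a` at a time. -/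
theorem exists_eq_d_add_incl (h : IsDivision r t) {l : List α} (hl : l.Nodup)
    {W W' : AddSubgroup N} (ht : ∀ a ∈ l, ∀ x ∈ W, t a x ∈ W')
    (hr : ∀ a ∈ l, ∀ x ∈ W', r a • x ∈ W) {j : ℤ} {z : Koszul N l} (hz : z ∈ piece W l j)
    (hdz : d r l z = 0) :
    ∃ w ∈ piece W' l (j + 1), ∃ c ∈ W, (∀ a ∈ l, t a c = 0) ∧ z = d r l w + incl l c := by
  induction l generalizing W W' j with
  | nil =>
    refine ⟨0, zero_mem _, z, ?_, fun _ ha => absurd ha List.not_mem_nil, (zero_add z).symm⟩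
    have hz' := mem_piece_nil.1 hz
    split_ifs at hz'
    · exact hz'
    · exact hz' ▸ W.zero_mem
  | cons a l ih =>
    obtain ⟨x, y⟩ := z
    obtain ⟨ha, hl⟩ := List.nodup_cons.1 hl
    have h_ne : ∀ b ∈ l, a ≠ b := fun b hb hab => ha (hab ▸ hb)
    rw [List.forall_mem_cons] at ht hr
    have hdx : d r l x + r a • y = 0 := (Prod.ext_iff.1 hdz).1
    have hta : ∀ u : Koszul N l, map (t a) l (r a • u) = u := (h.koszul l).div_smul a
    have htd : ∀ u : Koszul N l, map (t a) l (d r l u) = d r l (map (t a) l u) :=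
      map_d fun b hb => h.div_smul_of_ne a b (h_ne b hb)
    have hy : y = -d r l (map (t a) l x) := by
      rw [← htd, eq_neg_of_add_eq_zero_left hdx, _root_.map_neg, hta, neg_neg]
    have htx : map (t a) l x ∈ piece W' l j := map_mem_piece ht.1 hz.1
    obtain ⟨w, hw, c, hc, htc, h_eq⟩ := ih hl (W := W ⊓ (t a).ker) (W' := W' ⊓ (t a).ker)
      (fun b hb u hu => ⟨ht.2 b hb u hu.1, (h.div_comm a b u).trans
        (by rw [show t a u = 0 from hu.2, _root_.map_zero])⟩)
      (fun b hb u hu => ⟨hr.2 b hb u hu.1, (h.div_smul_of_ne a b (h_ne b hb) u).trans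
        (by rw [show t a u = 0 from hu.2, smul_zero])⟩)
      (z := x - r a • map (t a) l x)
      (mem_piece_inf_ker.2 ⟨sub_mem hz.1 (smul_mem_piece hr.1 htx),
        by rw [_root_.map_sub, hta, sub_self]⟩)
      (by rw [_root_.map_sub, _root_.map_smul, sub_eq_add_neg, ← smul_neg, ← hy, hdx])
    refine ⟨(w, map (t a) l x), ⟨piece_mono inf_le_left hw, by rwa [add_sub_cancel_right]⟩, c,
      hc.1, List.forall_mem_cons.2 ⟨hc.2, htc⟩, cons_ext ?_ (hy.trans (add_zero _).symm)⟩
    change x = d r l w + r a • map (t a) l x + incl l c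
    rw [add_right_comm, ← h_eq, sub_add_cancel]

theorem exists_eq_d (h : IsDivision r t) {l : List α} (hl : l.Nodup)
    {W W' : AddSubgroup N} (ht : ∀ a ∈ l, ∀ x ∈ W, t a x ∈ W')
    (hr : ∀ a ∈ l, ∀ x ∈ W', r a • x ∈ W) {j : ℤ} (hj : j ≠ 0) {z : Koszul N l}
    (hz : z ∈ piece W l j) (hdz : d r l z = 0) : ∃ w ∈ piece W' l (j + 1), z = d r l w := by
  obtain ⟨w, hw, c, -, -, rfl⟩ := h.exists_eq_d_add_incl hl ht hr hz hdz
  refine ⟨w, hw, ?_⟩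
  have hdw : d r l w ∈ piece W l j := by
    have hdw := d_mem_piece hr hw
    rwa [add_sub_cancel_right] at hdw
  rw [eq_zero_of_incl_mem_piece hj ((AddSubgroup.add_mem_cancel_left _ hdw).1 hz),
    _root_.map_zero, add_zero]

theorem vanishesAbove (h : IsDivision r t) {l : List α} (hl : l.Nodup) {P : ℤ → AddSubgroup N}
    {c : ℤ} (ht : ∀ a ∈ l, ∀ b, ∀ x ∈ P b, t a x ∈ P (b - 1))
    (hr : ∀ a ∈ l, ∀ b, ∀ x ∈ P b, r a • x ∈ P (b + 1))
    (hP : ∀ b > c, ∀ x ∈ P b, (∀ a ∈ l, t a x = 0) → x = 0) (j : ℤ) :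
    VanishesAbove r l P c j := by
  intro b hb z hz hdz
  obtain ⟨w, hw, x, hx, htx, rfl⟩ := h.exists_eq_d_add_incl hl (fun a ha => ht a ha b)
    (fun a ha x hx => sub_add_cancel b 1 ▸ hr a ha (b - 1) x hx) hz hdz
  exact ⟨w, hw, by rw [hP b hb x hx htx, _root_.map_zero, add_zero]⟩

theorem finsupp (h : IsDivision r t) (ι : Type*) :
    IsDivision r fun a => Finsupp.mapRange.addMonoidHom (ι := ι) (t a) where
  div_smul a x := Finsupp.ext fun k => h.div_smul a (x k)
  div_smul_of_ne a b hab x := Finsupp.ext fun k => h.div_smul_of_ne a b hab (x k)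
  div_comm a b x := Finsupp.ext fun k => h.div_comm a b (x k)

end IsDivision

end Koszul

/-! ### The approximation complex -/

section ApproximationComplex

open MvPolynomial (X C coeff monomial)

variable {τ B : Type*} [CommRing B]

/-- The polynomials which are homogeneous of degree `s`, where `s` may be negative. -/
noncomputable def homogeneousPiece (τ B : Type*) [CommRing B] (s : ℤ) :
    AddSubgroup (MvPolynomial τ B) :=
  (MvPolynomial.weightedHomogeneousSubmodule B (1 : τ → ℤ) s).toAddSubgroup

theorem weight_one_eq_degree (w : τ →₀ ℕ) : Finsupp.weight (1 : τ → ℤ) w = w.degree := by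
  simp [Finsupp.weight_apply, Finsupp.degree_apply, Finsupp.sum]

theorem mem_homogeneousPiece {s : ℤ} {p : MvPolynomial τ B} :
    p ∈ homogeneousPiece τ B s ↔ ∀ w, coeff w p ≠ 0 → (w.degree : ℤ) = s := by
  simp only [← weight_one_eq_degree]
  rfl

theorem monomial_mem_homogeneousPiece (w : τ →₀ ℕ) (b : B) :
    monomial w b ∈ homogeneousPiece τ B w.degree :=
  MvPolynomial.isWeightedHomogeneous_monomial _ _ _ (weight_one_eq_degree w)

theorem mul_mem_homogeneousPiece {s t : ℤ} {p q : MvPolynomial τ B}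
    (hp : p ∈ homogeneousPiece τ B s) (hq : q ∈ homogeneousPiece τ B t) :
    p * q ∈ homogeneousPiece τ B (s + t) :=
  MvPolynomial.IsWeightedHomogeneous.mul hp hq

theorem X_smul_mem_homogeneousPiece (a : τ) {s : ℤ} {p : MvPolynomial τ B}
    (hp : p ∈ homogeneousPiece τ B s) :
    (X a : MvPolynomial τ B) • p ∈ homogeneousPiece τ B (s + 1) :=
  add_comm 1 s ▸ mul_mem_homogeneousPiece (MvPolynomial.isWeightedHomogeneous_X B _ a) hp

theorem C_smul_mem_homogeneousPiece (b : B) {s : ℤ} {p : MvPolynomial τ B}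
    (hp : p ∈ homogeneousPiece τ B s) :
    (C b : MvPolynomial τ B) • p ∈ homogeneousPiece τ B s :=
  MvPolynomial.IsWeightedHomogeneous.C_mul hp b

theorem homogeneousPiece_of_neg {s : ℤ} (hs : s < 0) : homogeneousPiece τ B s = ⊥ := by
  refine (AddSubgroup.eq_bot_iff_forall _).2 fun p hp => ?_
  ext w
  by_contra hw
  exact absurd (mem_homogeneousPiece.1 hp w hw) (by lia)

/-- The quotient upon division by the variable `X a`. -/
noncomputable def divVariable (a : τ) : MvPolynomial τ B →+ MvPolynomial τ B where
  toFun p := p.divMonomial (Finsupp.single a 1)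
  map_zero' := MvPolynomial.zero_divMonomial _
  map_add' p q := MvPolynomial.add_divMonomial p q _

theorem coeff_divVariable (a : τ) (p : MvPolynomial τ B) (w : τ →₀ ℕ) :
    coeff w (divVariable a p) = coeff (Finsupp.single a 1 + w) p :=
  MvPolynomial.coeff_divMonomial _ _ _

theorem divVariable_C_smul (a : τ) (b : B) (p : MvPolynomial τ B) :
    divVariable a ((C b : MvPolynomial τ B) • p) = (C b : MvPolynomial τ B) • divVariable a p := by
  ext w
  simp only [smul_eq_mul, coeff_divVariable, MvPolynomial.coeff_C_mul]

theorem divVariable_X_smul_of_ne {a b : τ} (hab : a ≠ b) (p : MvPolynomial τ B) :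
    divVariable a ((X b : MvPolynomial τ B) • p) = (X b : MvPolynomial τ B) • divVariable a p := by
  classical
  ext w
  have h_single : Finsupp.single a 1 b = 0 := Finsupp.single_eq_of_ne' hab
  simp only [smul_eq_mul, coeff_divVariable, MvPolynomial.coeff_X_mul', Finsupp.mem_support_iff,
    Finsupp.add_apply, h_single, zero_add]
  split_ifs with hw
  · rw [add_tsub_assoc_of_le (Finsupp.single_le_iff.2 (Nat.one_le_iff_ne_zero.2 hw))]
  · rfl

theorem isDivision_divVariable :
    Koszul.IsDivision (X : τ → MvPolynomial τ B) (divVariable (B := B)) where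
  div_smul := MvPolynomial.X_mul_divMonomial
  div_smul_of_ne _ _ := divVariable_X_smul_of_ne
  div_comm a b p := by
    ext w
    simp only [coeff_divVariable, add_left_comm]

theorem divVariable_mem_homogeneousPiece (a : τ) {s : ℤ} {p : MvPolynomial τ B}
    (hp : p ∈ homogeneousPiece τ B s) : divVariable a p ∈ homogeneousPiece τ B (s - 1) := by
  refine mem_homogeneousPiece.2 fun w hw => ?_
  rw [coeff_divVariable] at hw
  have h_degree := mem_homogeneousPiece.1 hp _ hw
  rw [_root_.map_add, Finsupp.degree_single] at h_degree
  lia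

theorem eq_zero_of_forall_divVariable_eq_zero {s : ℤ} (hs : s ≠ 0) {p : MvPolynomial τ B}
    (hp : p ∈ homogeneousPiece τ B s) (h : ∀ a : τ, divVariable a p = 0) : p = 0 := by
  ext w
  by_contra hw
  have hw_ne : w ≠ 0 := by
    rintro rfl
    exact hs (mem_homogeneousPiece.1 hp 0 hw).symm
  obtain ⟨a, ha⟩ := Finsupp.ne_iff.1 hw_ne
  have h_coeff := coeff_divVariable a p (w - Finsupp.single a 1)
  rw [h, add_tsub_cancel_of_le (Finsupp.single_le_iff.2 (Nat.one_le_iff_ne_zero.2 ha))] at h_coeff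
  exact hw h_coeff.symm

namespace Koszul

variable {f : τ → B} {l : List τ}

theorem eq_zero_of_mem_piece_of_neg {s : ℤ} (hs : s < 0) {j : ℤ}
    {z : Koszul (MvPolynomial τ B) l} (hz : z ∈ piece (homogeneousPiece τ B s) l j) : z = 0 :=
  eq_zero_of_forall_map_eq_zero (N' := B) (ι := Empty) (g := nofun)
    (fun p hp _ => by rwa [homogeneousPiece_of_neg hs, AddSubgroup.mem_bot] at hp) hz nofun

theorem sum_map_monomial_coeff [Fintype τ] [DecidableEq τ] {s j : ℤ}
    {z : Koszul (MvPolynomial τ B) l} (hz : z ∈ piece (homogeneousPiece τ B s) l j) :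
    ∑ w ∈ Finset.univ.finsuppAntidiag s.toNat, map (monomial w).toAddMonoidHom l
      (map (MvPolynomial.coeffAddMonoidHom w) l z) = z := by
  simp only [map_map, ← map_sum]
  refine map_eq_self (fun p hp => ?_) hz
  refine (AddMonoidHom.finsetSum_apply _ _ p).trans (Eq.trans (Finset.sum_subset
    (fun w hw => ?_) fun w _ hw => ?_).symm p.support_sum_monomial_coeff)
  · have h_degree := mem_homogeneousPiece.1 hp w (MvPolynomial.mem_support_iff.1 hw)
    refine Finset.mem_finsuppAntidiag.2 ⟨?_, Finset.subset_univ _⟩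
    rw [← Finsupp.degree_eq_sum]
    lia
  · exact (congrArg (monomial w) (MvPolynomial.notMem_support_iff.1 hw)).trans
      (MvPolynomial.monomial_zero)

/-- The Koszul complex of `f` over the polynomial ring is exact where the one over `B` is, as the
polynomial ring is free over `B`. -/
theorem IsTorsionAbove.exists_d_C_eq [Finite τ] {c : ℤ} (h : IsTorsionAbove B ⊥ f l c) {i s : ℤ}
    (hi : c < i) {z : Koszul (MvPolynomial τ B) l} (hz : z ∈ piece (homogeneousPiece τ B s) l i)
    (hdz : d (fun a => (C (f a) : MvPolynomial τ B)) l z = 0) :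
    ∃ w ∈ piece (homogeneousPiece τ B s) l (i + 1),
      d (fun a => (C (f a) : MvPolynomial τ B)) l w = z := by
  classical
  have := Fintype.ofFinite τ
  have h_coeff : ∀ w : τ →₀ ℕ, ∃ u ∈ piece (⊤ : AddSubgroup B) l (i + 1),
      d f l u = map (MvPolynomial.coeffAddMonoidHom w) l z := fun w => by
    obtain ⟨s, hs, u, hu, hdu⟩ := h i hi (map (MvPolynomial.coeffAddMonoidHom w) l z)
      (map_mem_piece (fun _ _ => AddSubgroup.mem_top _) hz)
      (by rw [← map_d (r := fun a => (C (f a) : MvPolynomial τ B)) fun a _ p =>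
        MvPolynomial.coeff_C_mul w (f a) p, hdz, _root_.map_zero])
    exact ⟨u, hu, by rw [hdu, Submonoid.mem_bot.1 hs, one_smul]⟩
  choose u hu hdu using h_coeff
  rcases lt_or_ge s 0 with hs | hs
  · exact ⟨0, zero_mem _, by rw [_root_.map_zero, eq_zero_of_mem_piece_of_neg hs hz]⟩
  refine ⟨∑ w ∈ Finset.univ.finsuppAntidiag s.toNat, map (monomial w).toAddMonoidHom l (u w),
    sum_mem fun w hw => map_mem_piece (fun b _ => ?_) (hu w), ?_⟩
  · have h_degree : ∑ a, w a = s.toNat := (Finset.mem_finsuppAntidiag.1 hw).1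
    rw [← Finsupp.degree_eq_sum] at h_degree
    have hws : (w.degree : ℤ) = s := by lia
    exact hws ▸ monomial_mem_homogeneousPiece w b
  · rw [_root_.map_sum, ← sum_map_monomial_coeff hz]
    refine Finset.sum_congr rfl fun w _ => ?_
    rw [← hdu, map_d (r' := fun a => (C (f a) : MvPolynomial τ B)) fun a _ b =>
      (MvPolynomial.C_mul_monomial : C (f a) * monomial w b = _).symm]

/-- The module `𝒵_i` of the approximation complex of `f` in degree `b`: the cycles of exterior
degree `i` in the Koszul complex of `f` over the polynomial ring. The differential of `𝒵` is the
Koszul differential of the variables, which raises the polynomial degree; hence the shift by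
`i`. -/
noncomputable def approxCycles (f : τ → B) (l : List τ) (i b : ℤ) :
    AddSubgroup (Koszul (MvPolynomial τ B) l) :=
  piece (homogeneousPiece τ B (b - i)) l i ⊓
    (d (fun a => (C (f a) : MvPolynomial τ B)) l).toAddMonoidHom.ker

theorem exists_d_X_eq [Finite τ] (h : IsTorsionAbove B ⊥ f l 1) (hl : l.Nodup) {i s : ℤ}
    (hi : 1 ≤ i) {z : Koszul (MvPolynomial τ B) l} (hz : z ∈ piece (homogeneousPiece τ B s) l i)
    (hfz : d (fun a => (C (f a) : MvPolynomial τ B)) l z = 0)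
    (hXz : d (X : τ → MvPolynomial τ B) l z = 0) :
    ∃ w ∈ piece (homogeneousPiece τ B (s - 1)) l (i + 1),
      d (fun a => (C (f a) : MvPolynomial τ B)) l w = 0 ∧
        d (X : τ → MvPolynomial τ B) l w = z := by
  rcases lt_or_ge s 0 with hs | _
  · exact ⟨0, zero_mem _, _root_.map_zero _,
      by rw [_root_.map_zero, eq_zero_of_mem_piece_of_neg hs hz]⟩
  have hX_mem : ∀ a ∈ l, ∀ p ∈ homogeneousPiece τ B (s - 1),
      (X a : MvPolynomial τ B) • p ∈ homogeneousPiece τ B s :=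
    fun a _ p hp => sub_add_cancel s 1 ▸ X_smul_mem_homogeneousPiece a hp
  obtain ⟨w, hw, rfl⟩ := isDivision_divVariable.exists_eq_d hl
    (fun a _ p hp => divVariable_mem_homogeneousPiece a hp) hX_mem (by lia) hz hXz
  have hfw : d (fun a => (C (f a) : MvPolynomial τ B)) l w
      ∈ piece (homogeneousPiece τ B (s - 1)) l i :=
    add_sub_cancel_right i 1 ▸ d_mem_piece (fun a _ p hp => C_smul_mem_homogeneousPiece _ hp) hw
  obtain ⟨u, hu, hfu, hXu⟩ := exists_d_X_eq h hl hi hfw (d_d _ l w)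
    (by rw [d_d_anticomm, hfz, neg_zero])
  obtain ⟨v, hv, hfv⟩ := h.exists_d_C_eq (by lia) hu hfu
  have hXv : d (X : τ → MvPolynomial τ B) l v ∈ piece (homogeneousPiece τ B (s - 1)) l (i + 1) :=
    add_sub_cancel_right (i + 1) 1 ▸ d_mem_piece (fun a _ p hp => sub_add_cancel (s - 1) 1 ▸
      X_smul_mem_homogeneousPiece a hp) hv
  refine ⟨w + d X l v, add_mem hw hXv, ?_, ?_⟩
  · rw [_root_.map_add, d_d_anticomm _ _ l v, hfv, hXu, add_neg_cancel]
  · rw [_root_.map_add, d_d, add_zero]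
termination_by (s + 1).toNat
decreasing_by lia

theorem d_X_mem_approxCycles {i b : ℤ} {z : Koszul (MvPolynomial τ B) l}
    (hz : z ∈ approxCycles f l (i + 1) b) :
    d (X : τ → MvPolynomial τ B) l z ∈ approxCycles f l i b := by
  refine ⟨?_, ?_⟩
  · have hXz := d_mem_piece (W' := homogeneousPiece τ B (b - (i + 1) + 1))
      (fun a _ p hp => X_smul_mem_homogeneousPiece a hp) hz.1
    rwa [add_sub_cancel_right, ← sub_sub, sub_add_cancel] at hXz
  · exact (d_d_anticomm _ _ l z).trans (neg_eq_zero.2 ((congrArg (d X l) hz.2).trans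
      (_root_.map_zero _)))

theorem approxCycles_inf_ker [Finite τ] (h : IsTorsionAbove B ⊥ f l 1) (hl : l.Nodup) {i : ℤ}
    (hi : 1 ≤ i) (b : ℤ) :
    approxCycles f l i b ⊓ (d (X : τ → MvPolynomial τ B) l).toAddMonoidHom.ker
      = (approxCycles f l (i + 1) b).map (d (X : τ → MvPolynomial τ B) l).toAddMonoidHom := by
  ext z
  constructor
  · rintro ⟨⟨hz, hfz⟩, hXz⟩
    obtain ⟨w, hw, hfw, rfl⟩ := exists_d_X_eq h hl hi hz hfz hXz
    exact ⟨w, ⟨sub_sub b i 1 ▸ hw, hfw⟩, rfl⟩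
  · rintro ⟨w, hw, rfl⟩
    exact ⟨d_X_mem_approxCycles hw, d_d _ l w⟩

theorem X_smul_mem_approxCycles (a : τ) {i b : ℤ} {z : Koszul (MvPolynomial τ B) l}
    (hz : z ∈ approxCycles f l i b) :
    (X a : MvPolynomial τ B) • z ∈ approxCycles f l i (b + 1) := by
  refine ⟨smul_mem_piece (fun p hp => ?_) hz.1, ?_⟩
  · exact sub_add_eq_add_sub b i 1 ▸ X_smul_mem_homogeneousPiece a hp
  · exact (LinearMap.map_smul _ _ z).trans ((congrArg _ hz.2).trans (smul_zero _))

theorem map_divVariable_mem_approxCycles (a : τ) {i b : ℤ} {z : Koszul (MvPolynomial τ B) l}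
    (hz : z ∈ approxCycles f l i b) : map (divVariable a) l z ∈ approxCycles f l i (b - 1) := by
  refine ⟨map_mem_piece (fun p hp => ?_) hz.1, ?_⟩
  · exact sub_right_comm b 1 i ▸ divVariable_mem_homogeneousPiece a hp
  · exact (map_d (fun c _ p => divVariable_C_smul a (f c) p) z).symm.trans
      ((congrArg _ hz.2).trans (_root_.map_zero _))

theorem vanishesAbove_approxCycles (f : τ → B) (l : List τ) {l' : List τ} (hl' : l'.Nodup)
    (hl'_mem : ∀ a, a ∈ l') (i j : ℤ) :
    VanishesAbove (X : τ → MvPolynomial τ B) l' (approxCycles f l i) i j := by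
  refine (isDivision_divVariable.koszul l).vanishesAbove hl'
    (fun a _ b z hz => map_divVariable_mem_approxCycles a hz)
    (fun a _ b z hz => X_smul_mem_approxCycles a hz) (fun b hb z hz htz => ?_) j
  exact eq_zero_of_forall_map_eq_zero
    (fun p hp => eq_zero_of_forall_divVariable_eq_zero (by lia) hp) hz.1
    fun a => htz a (hl'_mem a)

theorem vanishesAbove_approxBoundaries [Finite τ] (h : IsTorsionAbove B ⊥ f l 1) (hl : l.Nodup)
    {l' : List τ} (hl' : l'.Nodup) (hl'_mem : ∀ a, a ∈ l') {i : ℤ} (hi : 1 ≤ i) (j : ℤ) :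
    VanishesAbove (X : τ → MvPolynomial τ B) l' (fun b => (approxCycles f l i b).map
      (d (X : τ → MvPolynomial τ B) l).toAddMonoidHom) i j := by
  rcases lt_or_ge j 0 with hj | _
  · exact VanishesAbove.of_neg _ _ _ _ hj
  refine (vanishesAbove_approxCycles f l hl' hl'_mem i j).map
    (fun a _ _ _ => X_smul_mem_approxCycles a) (fun a _ => LinearMap.map_smul (d X l) (X a)) ?_
  simp only [approxCycles_inf_ker h hl hi]
  exact vanishesAbove_approxBoundaries h hl hl' hl'_mem (by lia) (j - 1)
termination_by (j + 1).toNat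
decreasing_by lia

theorem incl_mem_approxCycles {b : ℤ} {p : MvPolynomial τ B} (hp : p ∈ homogeneousPiece τ B b) :
    incl l p ∈ approxCycles f l 0 b :=
  ⟨(sub_zero b).symm ▸ incl_mem_piece hp, d_incl _ l p⟩

/-- The hypothesis `h_ker` says that `ρ` identifies its image with the zeroth homology of the
approximation complex, that is, with the symmetric algebra of the ideal generated by `f`. -/
theorem vanishesAbove_map_of_ker_eq [Finite τ] (h : IsTorsionAbove B ⊥ f l 1) (hl : l.Nodup)
    {l' : List τ} (hl' : l'.Nodup) (hl'_mem : ∀ a, a ∈ l') {N : Type*} [AddCommGroup N]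
    [Module (MvPolynomial τ B) N] (ρ : MvPolynomial τ B →ₗ[MvPolynomial τ B] N)
    (h_ker : ∀ b, ∀ p ∈ homogeneousPiece τ B b,
      ρ p = 0 ↔ ∃ v ∈ approxCycles f l 1 b, d (X : τ → MvPolynomial τ B) l v = incl l p) (j : ℤ) :
    VanishesAbove (X : τ → MvPolynomial τ B) l'
      (fun b => (homogeneousPiece τ B b).map ρ.toAddMonoidHom) 0 j := by
  set g : Koszul (MvPolynomial τ B) l →+ N := ρ.toAddMonoidHom.comp (proj l)
  have h_proj : ∀ {b : ℤ} {z : Koszul (MvPolynomial τ B) l}, z ∈ approxCycles f l 0 b →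
      proj l z ∈ homogeneousPiece τ B b ∧ incl l (proj l z) = z := fun {b z} hz =>
    ⟨sub_zero b ▸ proj_mem hz.1, incl_proj hz.1⟩
  have h_map : ∀ b, (homogeneousPiece τ B b).map ρ.toAddMonoidHom
      = (approxCycles f l 0 b).map g := fun b => by
    ext y
    constructor
    · rintro ⟨p, hp, rfl⟩
      exact ⟨incl l p, incl_mem_approxCycles hp, congrArg ρ (proj_incl l p)⟩
    · rintro ⟨z, hz, rfl⟩
      exact ⟨proj l z, (h_proj hz).1, rfl⟩
  have h_inf_ker : ∀ b, approxCycles f l 0 b ⊓ g.ker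
      = (approxCycles f l 1 b).map (d (X : τ → MvPolynomial τ B) l).toAddMonoidHom := fun b => by
    ext z
    constructor
    · rintro ⟨hz, hgz⟩
      obtain ⟨v, hv, hdv⟩ := (h_ker b _ (h_proj hz).1).1 hgz
      exact ⟨v, hv, hdv.trans (h_proj hz).2⟩
    · rintro ⟨v, hv, rfl⟩
      have hz : d X l v ∈ approxCycles f l 0 b := d_X_mem_approxCycles hv
      exact ⟨hz, (h_ker b _ (h_proj hz).1).2 ⟨v, hv, (h_proj hz).2.symm⟩⟩
  simp only [h_map]
  refine (vanishesAbove_approxCycles f l hl' hl'_mem 0 j).map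
    (fun a _ b z hz => X_smul_mem_approxCycles a hz)
    (fun a _ z => (congrArg ρ (proj_smul _ l z)).trans (_root_.map_smul ρ _ _)) ?_
  simp only [h_inf_ker]
  exact vanishesAbove_approxBoundaries h hl hl' hl'_mem le_rfl (j - 1)

end Koszul

end ApproximationComplex

/-! ### Minimal graded resolutions -/

section GradedPieces

variable {A A' κ : Type*} [AddCommGroup A] [AddCommGroup A']

theorem exists_mem_map_eq {P : κ → AddSubgroup A} {Q : κ → AddSubgroup A'} (hP : ⨆ b, P b = ⊤)
    (hQ : iSupIndep Q) {g : A →+ A'} (hg : ∀ b, ∀ x ∈ P b, g x ∈ Q b) {b : κ} {y : A'}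
    (hy : y ∈ Q b) (hy_range : y ∈ g.range) : ∃ x ∈ P b, g x = y := by
  obtain ⟨x, rfl⟩ := hy_range
  have hx : x ∈ P b ⊔ ⨆ c, ⨆ _ : c ≠ b, P c := by
    rw [← iSup_split_single, hP]
    exact AddSubgroup.mem_top x
  obtain ⟨x₁, hx₁, x₂, hx₂, rfl⟩ := AddSubgroup.mem_sup.1 hx
  have h_le : ⨆ c, ⨆ _ : c ≠ b, P c ≤ (⨆ c, ⨆ _ : c ≠ b, Q c).comap g :=
    iSup₂_le fun c hc x hx =>
      AddSubgroup.mem_iSup_of_mem c (AddSubgroup.mem_iSup_of_mem hc (hg c x hx))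
  have hgx₂ : g x₂ ∈ Q b := by
    rwa [_root_.map_add, AddSubgroup.add_mem_cancel_left _ (hg b x₁ hx₁)] at hy
  refine ⟨x₁, hx₁, ?_⟩
  rw [_root_.map_add, AddSubgroup.disjoint_def.1 (hQ b) hgx₂ (h_le hx₂), add_zero]

theorem iSupIndep_of_coeff {ι C : Type*} [AddCommGroup C] {P : κ → AddSubgroup A}
    (coeff : ι → A →+ C) (deg : ι → κ) (h_ext : ∀ x, (∀ i, coeff i x = 0) → x = 0)
    (hP : ∀ b, ∀ x ∈ P b, ∀ i, coeff i x ≠ 0 → deg i = b) : iSupIndep P := by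
  intro b
  refine AddSubgroup.disjoint_def.2 fun {x} hx hx' => h_ext x fun i => ?_
  by_contra hi
  have h_le : ⨆ c, ⨆ _ : c ≠ b, P c ≤ (coeff i).ker := iSup₂_le fun c hc y hy => by
    by_contra hiy
    exact hc ((hP c y hy i hiy).symm.trans (hP b x hx i hi))
  exact hi (h_le hx')

end GradedPieces

section FreePiece

open MvPolynomial (X C coeff monomial)

variable {τ B ι N : Type*} [CommRing B]

/-- The homogeneous elements of degree `b` of the free module over the polynomial ring whose
generators have degrees `σ k`. -/
noncomputable def freePiece (τ B : Type*) [CommRing B] (σ : ι → ℤ) (b : ℤ) :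
    AddSubgroup (ι →₀ MvPolynomial τ B) :=
  ⨅ k, (homogeneousPiece τ B (b - σ k)).comap (Finsupp.applyAddHom k)

variable {σ : ι → ℤ}

theorem mem_freePiece {b : ℤ} {x : ι →₀ MvPolynomial τ B} :
    x ∈ freePiece τ B σ b ↔ ∀ k, x k ∈ homogeneousPiece τ B (b - σ k) :=
  AddSubgroup.mem_iInf

theorem single_mem_freePiece (k : ι) {b : ℤ} {p : MvPolynomial τ B}
    (hp : p ∈ homogeneousPiece τ B (b - σ k)) : Finsupp.single k p ∈ freePiece τ B σ b := by
  classical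
  refine mem_freePiece.2 fun k' => ?_
  rw [Finsupp.single_apply]
  split_ifs with hk
  · exact hk ▸ hp
  · exact zero_mem _

theorem smul_mem_freePiece {s t : ℤ} {p : MvPolynomial τ B} (hp : p ∈ homogeneousPiece τ B s)
    {x : ι →₀ MvPolynomial τ B} (hx : x ∈ freePiece τ B σ t) : p • x ∈ freePiece τ B σ (s + t) :=
  mem_freePiece.2 fun k =>
    add_sub_assoc s t (σ k) ▸ mul_mem_homogeneousPiece hp (mem_freePiece.1 hx k)

theorem iSupIndep_freePiece (τ B : Type*) [CommRing B] (σ : ι → ℤ) :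
    iSupIndep (freePiece τ B σ) := by
  refine iSupIndep_of_coeff
    (fun i : ι × (τ →₀ ℕ) => (MvPolynomial.coeffAddMonoidHom i.2).comp (Finsupp.applyAddHom i.1))
    (fun i => i.2.degree + σ i.1)
    (fun x hx => Finsupp.ext fun k => MvPolynomial.ext _ _ fun w => hx (k, w)) ?_
  intro b x hx i hi
  exact eq_sub_iff_add_eq.1 (mem_homogeneousPiece.1 (mem_freePiece.1 hx i.1) i.2 hi)

theorem iSup_homogeneousPiece (τ B : Type*) [CommRing B] : ⨆ b, homogeneousPiece τ B b = ⊤ := by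
  refine top_unique fun p _ => ?_
  induction p using MvPolynomial.induction_on' with
  | monomial w b => exact AddSubgroup.mem_iSup_of_mem _ (monomial_mem_homogeneousPiece w b)
  | add p q hp hq => exact add_mem (hp trivial) (hq trivial)

theorem iSup_freePiece (τ B : Type*) [CommRing B] (σ : ι → ℤ) : ⨆ b, freePiece τ B σ b = ⊤ := by
  refine top_unique fun x _ => ?_
  induction x using Finsupp.induction_linear with
  | zero => exact zero_mem _
  | add x y hx hy => exact add_mem (hx trivial) (hy trivial)
  | single k p =>
    have h_le : ⨆ b, homogeneousPiece τ B b ≤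
        (⨆ b, freePiece τ B σ b).comap (Finsupp.singleAddHom k) := iSup_le fun b p hp =>
      AddSubgroup.mem_iSup_of_mem (b + σ k)
        (single_mem_freePiece k ((add_sub_cancel_right b (σ k)).symm ▸ hp))
    exact h_le (iSup_homogeneousPiece τ B ▸ AddSubgroup.mem_top p)

theorem vanishesAbove_freePiece {l : List τ} (hl : l.Nodup) (hl_mem : ∀ a, a ∈ l) {c : ℤ}
    (hσ : ∀ k, σ k ≤ c) (j : ℤ) :
    Koszul.VanishesAbove (X : τ → MvPolynomial τ B) l (freePiece τ B σ) c j := by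
  refine (isDivision_divVariable.finsupp ι).vanishesAbove hl ?_ ?_ ?_ j
  · exact fun a _ b x hx => mem_freePiece.2 fun k =>
      sub_right_comm b 1 (σ k) ▸ divVariable_mem_homogeneousPiece a (mem_freePiece.1 hx k)
  · exact fun a _ b x hx => mem_freePiece.2 fun k =>
      add_sub_right_comm b 1 (σ k) ▸ X_smul_mem_homogeneousPiece a (mem_freePiece.1 hx k)
  · intro b hb x hx h
    refine Finsupp.ext fun k => ?_
    exact eq_zero_of_forall_divVariable_eq_zero (by have := hσ k; lia) (mem_freePiece.1 hx k)
      fun a => DFunLike.congr_fun (h a (hl_mem a)) k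

variable [AddCommGroup N] [Module (MvPolynomial τ B) N]
  {g : (ι →₀ MvPolynomial τ B) →ₗ[MvPolynomial τ B] N}

theorem map_freePiece {Q : ℤ → AddSubgroup N}
    (hQ : ∀ s t, ∀ p ∈ homogeneousPiece τ B s, ∀ x ∈ Q t, p • x ∈ Q (s + t))
    (hQ_indep : iSupIndep Q) (hg : ∀ k, g (Finsupp.single k 1) ∈ Q (σ k)) (b : ℤ) :
    (freePiece τ B σ b).map g.toAddMonoidHom = Q b ⊓ g.toAddMonoidHom.range := by
  have h_mem : ∀ b, ∀ x ∈ freePiece τ B σ b, g x ∈ Q b := by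
    intro b x hx
    rw [← Finsupp.sum_single x, Finsupp.sum, _root_.map_sum]
    refine sum_mem fun k _ => ?_
    rw [← mul_one (x k), ← smul_eq_mul, ← Finsupp.smul_single, _root_.map_smul]
    exact sub_add_cancel b (σ k) ▸ hQ _ _ _ (mem_freePiece.1 hx k) _ (hg k)
  refine le_antisymm ?_ fun y hy => ?_
  · rintro _ ⟨x, hx, rfl⟩
    exact ⟨h_mem b x hx, x, rfl⟩
  · exact exists_mem_map_eq (iSup_freePiece τ B σ) hQ_indep h_mem hy.1 hy.2

theorem exists_mem_smul_top_map_eq {l : List τ} {P : ℤ → AddSubgroup (ι →₀ MvPolynomial τ B)}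
    {c : ℤ} (h : Koszul.VanishesAbove (X : τ → MvPolynomial τ B) l
      (fun b => (P b).map g.toAddMonoidHom) c 0)
    {𝔪 : Ideal (MvPolynomial τ B)} (hX : ∀ a, X a ∈ 𝔪) {b : ℤ} (hb : c < b)
    {e : ι →₀ MvPolynomial τ B} (he : e ∈ P b) :
    ∃ u ∈ 𝔪 • (⊤ : Submodule (MvPolynomial τ B) (ι →₀ MvPolynomial τ B)), g u = g e := by
  obtain ⟨w, hw, hdw⟩ := h b hb (Koszul.incl l (g e))
    (Koszul.incl_mem_piece ⟨e, he, rfl⟩) (Koszul.d_incl _ l _)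
  obtain ⟨x, hx, rfl⟩ := Koszul.exists_map_eq hw
  have hdx : Koszul.d (X : τ → MvPolynomial τ B) l x ∈ Koszul.piece
      (𝔪 • (⊤ : Submodule (MvPolynomial τ B) (ι →₀ MvPolynomial τ B))).toAddSubgroup l 0 :=
    Koszul.d_mem_piece (fun a _ y _ => Submodule.smul_mem_smul (hX a) (Submodule.mem_top (x := y)))
      (Koszul.piece_mono le_top hx)
  refine ⟨_, Koszul.proj_mem hdx, ?_⟩
  rw [← Koszul.map_d fun a _ y => _root_.map_smul g (X a) y, ← Koszul.incl_proj hdx,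
    Koszul.map_incl] at hdw
  have h_proj := congrArg (Koszul.proj l) hdw
  rwa [Koszul.proj_incl, Koszul.proj_incl] at h_proj

/-- Nakayama: a generator of degree above `c` would have its image in `(X)N`, hence would lie in
`𝔪F + ker g = 𝔪F`. -/
theorem le_of_vanishesAbove_map {l : List τ} {c : ℤ}
    (h : Koszul.VanishesAbove (X : τ → MvPolynomial τ B) l
      (fun b => (freePiece τ B σ b).map g.toAddMonoidHom) c 0)
    {𝔪 : Ideal (MvPolynomial τ B)} (hX : ∀ a, X a ∈ 𝔪) (h_one : 1 ∉ 𝔪)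
    (hg : LinearMap.ker g ≤ 𝔪 • (⊤ : Submodule (MvPolynomial τ B) (ι →₀ MvPolynomial τ B)))
    (k : ι) : σ k ≤ c := by
  by_contra hk
  have he : Finsupp.single k (1 : MvPolynomial τ B) ∈ freePiece τ B σ (σ k) := by
    refine single_mem_freePiece k ?_
    rw [sub_self]
    exact MvPolynomial.isWeightedHomogeneous_one B _
  obtain ⟨u, hu, hgu⟩ := exists_mem_smul_top_map_eq h hX (not_le.1 hk) he
  have h_single := (Submodule.sub_mem_iff_left _ hu).1 (hg (LinearMap.sub_mem_ker_iff.2 hgu.symm))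
  have h_le : 𝔪 • (⊤ : Submodule (MvPolynomial τ B) (ι →₀ MvPolynomial τ B)) ≤
      Submodule.comap (Finsupp.lapply k) 𝔪 :=
    Submodule.smul_le.2 fun p hp x _ => 𝔪.mul_mem_right (x k) hp
  have h_one_mem := h_le h_single
  rw [Submodule.mem_comap, Finsupp.lapply_apply, Finsupp.single_eq_same] at h_one_mem
  exact h_one h_one_mem

theorem vanishesAbove_freePiece_inf_ker {l : List τ} (hl : l.Nodup) (hl_mem : ∀ a, a ∈ l) {c : ℤ}
    (hσ : ∀ k, σ k ≤ c)
    (h : ∀ j, Koszul.VanishesAbove (X : τ → MvPolynomial τ B) l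
      (fun b => (freePiece τ B σ b).map g.toAddMonoidHom) c j) (j : ℤ) :
    Koszul.VanishesAbove (X : τ → MvPolynomial τ B) l
      (fun b => freePiece τ B σ b ⊓ g.toAddMonoidHom.ker) (c + 1) j :=
  (vanishesAbove_freePiece hl hl_mem (fun k => (hσ k).trans (Int.le_add_one le_rfl)) j).inf_ker
    (fun a _ b _ hx => add_comm 1 b ▸
      smul_mem_freePiece (MvPolynomial.isWeightedHomogeneous_X B _ a) hx)
    (fun _ _ x => _root_.map_smul g _ x) (h (j + 1))

end FreePiece

namespace MinGradedFreeRes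

variable {K τ B γ M : Type} [Field K] [CommRing B] [Algebra K (MvPolynomial τ B)]
  [AddCommGroup γ] {𝒜 : γ → Submodule K (MvPolynomial τ B)} {𝔪 : Ideal (MvPolynomial τ B)}
  [AddCommGroup M] [Module (MvPolynomial τ B) M] [Module K M] {ℳ : γ → Submodule K M}

theorem single_mem (R : MinGradedFreeRes K (MvPolynomial τ B) 𝒜 𝔪 M ℳ) (h_one : 1 ∈ 𝒜 0) (i : ℕ)
    (k k' : R.ι i) : Finsupp.single k (1 : MvPolynomial τ B) k' ∈ 𝒜 (R.σ i k - R.σ i k') := by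
  classical
  rw [Finsupp.single_apply]
  split_ifs with hk
  · rwa [hk, sub_self]
  · exact zero_mem _

theorem range_d_le (R : MinGradedFreeRes K (MvPolynomial τ B) 𝒜 𝔪 M ℳ) (i : ℕ) :
    LinearMap.range (R.d i) ≤ 𝔪 • ⊤ := by
  rintro _ ⟨x, rfl⟩
  exact R.minimal i x

theorem map_d_freePiece (R : MinGradedFreeRes K (MvPolynomial τ B) 𝒜 𝔪 M ℳ) (h_one : 1 ∈ 𝒜 0)
    (deg : γ →+ ℤ) (h𝒜 : ∀ g, ∀ p ∈ 𝒜 g, p ∈ homogeneousPiece τ B (deg g)) (i : ℕ) (b : ℤ) :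
    (freePiece τ B (fun k => deg (R.σ (i + 1) k)) b).map (R.d i).toAddMonoidHom =
      freePiece τ B (fun k => deg (R.σ i k)) b ⊓ (R.d i).toAddMonoidHom.range :=
  map_freePiece (Q := freePiece τ B fun k => deg (R.σ i k))
    (fun _ _ _ hp _ hx => smul_mem_freePiece hp hx) (iSupIndep_freePiece τ B _)
    (fun k => mem_freePiece.2 fun k' =>
      _root_.map_sub deg _ _ ▸ h𝒜 _ _ (R.graded_d i _ _ (R.single_mem h_one (i + 1) k) k')) b

theorem degree_le (R : MinGradedFreeRes K (MvPolynomial τ B) 𝒜 𝔪 M ℳ) (h_one : 1 ∈ 𝒜 0)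
    (deg : γ →+ ℤ) (h𝒜 : ∀ g, ∀ p ∈ 𝒜 g, p ∈ homogeneousPiece τ B (deg g))
    (h𝔪_X : ∀ a, MvPolynomial.X a ∈ 𝔪) (h𝔪_one : 1 ∉ 𝔪) {Q : ℤ → AddSubgroup M}
    (hℳ : ∀ g, ∀ x ∈ ℳ g, x ∈ Q (deg g))
    (hQ : ∀ s t, ∀ p ∈ homogeneousPiece τ B s, ∀ x ∈ Q t, p • x ∈ Q (s + t))
    (hQ_indep : iSupIndep Q) {l : List τ} (hl : l.Nodup) (hl_mem : ∀ a, a ∈ l)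
    (h : ∀ j, Koszul.VanishesAbove (MvPolynomial.X : τ → MvPolynomial τ B) l Q 0 j) (i : ℕ)
    (k : R.ι i) : deg (R.σ i k) ≤ i := by
  have h_map_ε : Q = fun b =>
      (freePiece τ B (fun k => deg (R.σ 0 k)) b).map R.ε.toAddMonoidHom := by
    funext b
    rw [map_freePiece hQ hQ_indep fun k => hℳ _ _ (R.graded_ε _ _ (R.single_mem h_one 0 k)),
      AddMonoidHom.range_eq_top.2 R.surj, inf_top_eq]
  suffices h_all : (∀ k, deg (R.σ i k) ≤ i) ∧ ∀ j,
      Koszul.VanishesAbove (MvPolynomial.X : τ → MvPolynomial τ B) l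
        (fun b => freePiece τ B (fun k => deg (R.σ i k)) b ⊓ (R.d i).toAddMonoidHom.range)
        (i + 1) j from h_all.1 k
  clear k
  induction i with
  | zero =>
    have h_ker : R.ε.toAddMonoidHom.ker = (R.d 0).toAddMonoidHom.range :=
      AddSubgroup.ext R.exact_ε
    rw [h_map_ε] at h
    have hσ := le_of_vanishesAbove_map (h 0) h𝔪_X h𝔪_one
      (R.exact_ε.linearMap_ker_eq ▸ R.range_d_le 0)
    exact ⟨hσ, h_ker ▸ vanishesAbove_freePiece_inf_ker hl hl_mem hσ h⟩
  | succ i ih =>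
    have h_ker : (R.d i).toAddMonoidHom.ker = (R.d (i + 1)).toAddMonoidHom.range :=
      AddSubgroup.ext (R.exact_d i)
    have h_map := ih.2
    simp only [← R.map_d_freePiece h_one deg h𝒜] at h_map
    have hσ := le_of_vanishesAbove_map (h_map 0) h𝔪_X h𝔪_one
      ((R.exact_d i).linearMap_ker_eq ▸ R.range_d_le (i + 1))
    rw [Nat.cast_succ]
    exact ⟨hσ, h_ker ▸ vanishesAbove_freePiece_inf_ker hl hl_mem hσ h_map⟩

end MinGradedFreeRes

/-! ### Rees algebras of ideals of linear type -/

section ReesAlgebra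

open MvPolynomial (X C coeff monomial aeval)

theorem YLinear.eq_C_add_sum {B : Type*} [CommRing B] {n : ℕ}
    {p : MvPolynomial (Fin (n + 1)) B} (hp : YLinear p) :
    p = C (coeff 0 p) + ∑ j, C (coeff (Finsupp.single j 1) p) * X j := by
  ext w
  have h_degree : coeff w p ≠ 0 → w.degree ≤ 1 := fun hw => by
    rw [Finsupp.degree_eq_sum]
    exact hp w hw
  simp only [MvPolynomial.coeff_add, MvPolynomial.coeff_sum, MvPolynomial.coeff_C,
    MvPolynomial.coeff_C_mul, MvPolynomial.coeff_X, mul_ite, mul_one, mul_zero]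
  rcases eq_or_ne w 0 with rfl | hw
  · simp
  rcases eq_or_ne w.degree 1 with hw_one | hw_one
  · obtain ⟨i, rfl⟩ : ∃ i, Finsupp.single i 1 = w := Finsupp.range_single_one.ge hw_one
    simp [Finsupp.single_left_inj, hw.symm]
  · have h_coeff : coeff w p = 0 := by
      by_contra h_ne
      have := h_degree h_ne
      have := (Finsupp.degree_eq_zero_iff w).not.2 hw
      lia
    rw [h_coeff, if_neg hw.symm, zero_add, Finset.sum_eq_zero]
    intro j _
    rw [if_neg]
    rintro rfl
    exact hw_one (Finsupp.degree_single j 1)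

theorem linearCombination_eq_sum_smul {R ι : Type*} [CommSemiring R] [Fintype ι] (v : ι → R)
    (c : ι →₀ R) : Finsupp.linearCombination R v c = ∑ j, v j • c j := by
  rw [Finsupp.linearCombination_apply, Finsupp.sum_fintype _ _ (by simp)]
  simp only [smul_eq_mul, mul_comm]

theorem exists_mem_freePiece_of_mem_map_ker {τ B : Type*} [CommRing B] {f : τ → B} {b : ℤ}
    {p : MvPolynomial τ B} (hp : p ∈ homogeneousPiece τ B b)
    (hp_map : p ∈ (LinearMap.ker (Finsupp.linearCombination (MvPolynomial τ B)
        fun a => (C (f a) : MvPolynomial τ B))).map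
      (Finsupp.linearCombination (MvPolynomial τ B) X)) :
    ∃ x ∈ freePiece τ B (fun _ => 1) b,
      Finsupp.linearCombination (MvPolynomial τ B) X x = p ∧
        Finsupp.linearCombination (MvPolynomial τ B)
          (fun a => (C (f a) : MvPolynomial τ B)) x = 0 := by
  let Q : ℤ → AddSubgroup (MvPolynomial τ B × MvPolynomial τ B) := fun b =>
    (homogeneousPiece τ B b).prod (homogeneousPiece τ B (b - 1))
  let g : (τ →₀ MvPolynomial τ B) →ₗ[MvPolynomial τ B] MvPolynomial τ B × MvPolynomial τ B :=
    (Finsupp.linearCombination (MvPolynomial τ B) X).prod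
      (Finsupp.linearCombination (MvPolynomial τ B) fun a => C (f a))
  have hQ : ∀ s t, ∀ q ∈ homogeneousPiece τ B s, ∀ x ∈ Q t, q • x ∈ Q (s + t) :=
    fun s t q hq x hx => ⟨mul_mem_homogeneousPiece hq hx.1,
      add_sub_assoc s t 1 ▸ mul_mem_homogeneousPiece hq hx.2⟩
  have hQ_indep : iSupIndep Q := iSupIndep_of_coeff
    (Sum.elim (fun w => (MvPolynomial.coeffAddMonoidHom w).comp (AddMonoidHom.fst _ _))
      fun w => (MvPolynomial.coeffAddMonoidHom w).comp (AddMonoidHom.snd _ _))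
    (Sum.elim (fun w => (w.degree : ℤ)) fun w => w.degree + 1)
    (fun x hx => Prod.ext (MvPolynomial.ext _ _ fun w => hx (.inl w))
      (MvPolynomial.ext _ _ fun w => hx (.inr w)))
    (fun b x hx => Sum.rec (mem_homogeneousPiece.1 hx.1)
      fun w hw => eq_sub_iff_add_eq.1 (mem_homogeneousPiece.1 hx.2 w hw))
  have hg_single : ∀ a, g (Finsupp.single a 1) = (X a, C (f a)) := fun a =>
    Prod.ext (by simp [g]) (by simp [g])
  have hg : ∀ a, g (Finsupp.single a 1) ∈ Q 1 := fun a =>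
    hg_single a ▸
      ⟨MvPolynomial.isWeightedHomogeneous_X B _ a, MvPolynomial.isWeightedHomogeneous_C _ _⟩
  have hp_range : (p, 0) ∈ Q b ⊓ g.toAddMonoidHom.range := by
    obtain ⟨x, hx, hxp⟩ := hp_map
    exact ⟨⟨hp, zero_mem _⟩, x, Prod.ext hxp hx⟩
  rw [← map_freePiece (Q := Q) (σ := fun _ => 1) hQ hQ_indep hg b] at hp_range
  obtain ⟨x, hx, hgx⟩ := hp_range
  exact ⟨x, hx, congrArg Prod.fst hgx, congrArg Prod.snd hgx⟩

variable {B : Type*} [CommRing B] {n : ℕ} {I : Ideal B} {f : Fin (n + 1) → B}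
  {hf : ∀ j, f j ∈ I}

theorem coe_reesStructureMap (p : MvPolynomial (Fin (n + 1)) B) :
    (reesStructureMap I f hf p : Polynomial B) =
      aeval (fun j => Polynomial.X * Polynomial.C (f j)) p := by
  simp only [Polynomial.X_mul_C]
  exact MvPolynomial.comp_aeval_apply (fun j => fX I (f j) (hf j)) (reesAlgebra I).val p

/-- A relation `a + ∑ aⱼ yⱼ` maps to `a + (∑ aⱼ fⱼ) t`, so that `a = 0` and `∑ aⱼ fⱼ = 0`. -/
theorem IsLinearTypePres.ker_le (h : IsLinearTypePres (reesStructureMap I f hf)) :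
    RingHom.ker (reesStructureMap I f hf) ≤
      (LinearMap.ker (Finsupp.linearCombination (MvPolynomial (Fin (n + 1)) B)
        fun j => (C (f j) : MvPolynomial (Fin (n + 1)) B))).map
        (Finsupp.linearCombination (MvPolynomial (Fin (n + 1)) B) X) := by
  obtain ⟨G, hG, h_ker⟩ := h
  refine h_ker.trans_le (Ideal.span_le.2 fun p hpG => ?_)
  have hp : reesStructureMap I f hf p = 0 := by
    have hp : p ∈ RingHom.ker (reesStructureMap I f hf).toRingHom :=
      h_ker ▸ Ideal.subset_span hpG
    exact hp
  set c : Fin (n + 1) → B := fun j => coeff (Finsupp.single j 1) p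
  have h_eq : p = C (coeff 0 p) + ∑ j, C (c j) * X j := (hG p hpG).eq_C_add_sum
  have h_image : Polynomial.C (coeff 0 p) + Polynomial.X * Polynomial.C (∑ j, c j * f j) = 0 := by
    have h_coe := (coe_reesStructureMap (hf := hf) p).symm.trans (congrArg Subtype.val hp)
    rw [h_eq, ZeroMemClass.coe_zero] at h_coe
    simpa only [_root_.map_add, _root_.map_sum, _root_.map_mul, MvPolynomial.aeval_C,
      MvPolynomial.aeval_X, Polynomial.algebraMap_eq, mul_left_comm, Finset.mul_sum] using h_coe
  have h_const : coeff 0 p = 0 := by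
    simpa using congrArg (Polynomial.coeff · 0) h_image
  have h_syzygy : ∑ j, c j * f j = 0 := by
    simpa [Polynomial.coeff_C] using congrArg (Polynomial.coeff · 1) h_image
  refine ⟨Finsupp.equivFunOnFinite.symm fun j => C (c j), ?_, ?_⟩
  · rw [SetLike.mem_coe, LinearMap.mem_ker, linearCombination_eq_sum_smul]
    simpa [mul_comm] using congrArg (C : B → MvPolynomial (Fin (n + 1)) B) h_syzygy
  · rw [h_const, _root_.map_zero, zero_add] at h_eq
    rw [linearCombination_eq_sum_smul, h_eq]
    exact Finset.sum_congr rfl fun j _ => mul_comm _ _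

theorem reesStructureMap_eq_zero_iff (h : IsLinearTypePres (reesStructureMap I f hf)) {b : ℤ}
    {p : MvPolynomial (Fin (n + 1)) B} (hp : p ∈ homogeneousPiece (Fin (n + 1)) B b) :
    reesStructureMap I f hf p = 0 ↔
      ∃ v ∈ Koszul.approxCycles f (List.finRange (n + 1)) 1 b,
        Koszul.d (X : Fin (n + 1) → MvPolynomial (Fin (n + 1)) B) _ v = Koszul.incl _ p := by
  constructor
  · intro hp_zero
    obtain ⟨a, ha, haX, haf⟩ := exists_mem_freePiece_of_mem_map_ker hp (h.ker_le hp_zero)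
    rw [linearCombination_eq_sum_smul, Fin.sum_univ_def] at haX haf
    obtain ⟨v, hv, hdv⟩ := Koszul.exists_d_eq_incl_sum (R := MvPolynomial (Fin (n + 1)) B)
      (mem_freePiece.1 ha) (List.finRange (n + 1))
    refine ⟨v, ⟨hv, ?_⟩, (hdv X).trans (congrArg (Koszul.incl _) haX)⟩
    exact (hdv fun j => (C (f j) : MvPolynomial (Fin (n + 1)) B)).trans
      ((congrArg (Koszul.incl _) haf).trans (_root_.map_zero _))
  · rintro ⟨v, ⟨-, hv⟩, hdv⟩
    let φ : MvPolynomial (Fin (n + 1)) B →ₐ[B] Polynomial B :=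
      aeval fun j => Polynomial.X * Polynomial.C (f j)
    let g : MvPolynomial (Fin (n + 1)) B →+ Polynomial B := φ.toRingHom.toAddMonoidHom
    have hg : ∀ a q, g ((X a : MvPolynomial (Fin (n + 1)) B) • q)
        = (Polynomial.X * Polynomial.C (f a)) • g q := fun a q =>
      (_root_.map_mul φ _ _).trans (congrArg (· * φ q) (MvPolynomial.aeval_X _ a))
    have hgC : ∀ a q, g ((C (f a) : MvPolynomial (Fin (n + 1)) B) • q)
        = Polynomial.C (f a) • g q := fun a q =>
      (_root_.map_mul φ _ _).trans (congrArg (· * φ q) (MvPolynomial.aeval_C _ (f a)))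
    have h_incl := congrArg (Koszul.map g _) hdv
    rw [Koszul.map_d (fun a _ => hg a), Koszul.d_mul_left, ← Koszul.map_d (fun a _ => hgC a),
      show Koszul.d (fun a => C (f a)) _ v = 0 from hv, _root_.map_zero, smul_zero,
      Koszul.map_incl] at h_incl
    have h_proj := congrArg (Koszul.proj _) h_incl
    rw [Koszul.proj_incl, _root_.map_zero] at h_proj
    exact Subtype.ext ((coe_reesStructureMap p).trans h_proj.symm)

/-- The elements of the Rees algebra which are homogeneous of degree `b` in the parameter. -/
noncomputable def reesPiece (I : Ideal B) (b : ℤ) : AddSubgroup (reesAlgebra I) :=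
  ⨅ i : ℕ, ⨅ _ : (i : ℤ) ≠ b,
    ((Polynomial.lcoeff B i).toAddMonoidHom.comp (reesAlgebra I).val.toRingHom.toAddMonoidHom).ker

theorem mem_reesPiece {b : ℤ} {x : reesAlgebra I} :
    x ∈ reesPiece I b ↔ ∀ i : ℕ, (x : Polynomial B).coeff i ≠ 0 → (i : ℤ) = b := by
  simp only [reesPiece, AddSubgroup.mem_iInf]
  exact forall_congr' fun i => not_imp_comm

theorem iSupIndep_reesPiece (I : Ideal B) : iSupIndep (reesPiece I) :=
  iSupIndep_of_coeff
    (fun i => (Polynomial.lcoeff B i).toAddMonoidHom.comp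
      (reesAlgebra I).val.toRingHom.toAddMonoidHom) (fun i : ℕ => (i : ℤ))
    (fun _ hx => Subtype.ext (Polynomial.ext hx)) fun _ _ => mem_reesPiece.1

theorem reesStructureMap_surjective (hI : I = span (Set.range f)) :
    Function.Surjective (reesStructureMap I f hf) := by
  have h_le : reesAlgebra I ≤ ((reesAlgebra I).val.comp (reesStructureMap I f hf)).range := by
    refine (adjoin_monomial_eq_reesAlgebra I).ge.trans (Algebra.adjoin_le_iff.2 ?_)
    rintro _ ⟨y, hy, rfl⟩
    obtain ⟨c, rfl⟩ := Ideal.mem_span_range_iff_exists_fun.1 (hI ▸ hy : y ∈ span (Set.range f))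
    refine ⟨∑ j, C (c j) * X j, (coe_reesStructureMap _).trans ?_⟩
    simp [← Polynomial.C_mul_X_eq_monomial, mul_assoc]
  intro x
  obtain ⟨p, hp⟩ := h_le x.2
  exact ⟨p, Subtype.ext hp⟩

theorem aeval_X_mul_C_monomial (f : Fin (n + 1) → B) (w : Fin (n + 1) →₀ ℕ) (c : B) :
    aeval (fun j => Polynomial.X * Polynomial.C (f j)) (monomial w c) =
      Polynomial.monomial w.degree (c * w.prod fun j k => f j ^ k) := by
  simp only [MvPolynomial.aeval_monomial, mul_pow, Polynomial.algebraMap_eq, Finsupp.prod,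
    Finset.prod_mul_distrib, Finset.prod_pow_eq_pow_sum, ← Polynomial.C_mul_X_pow_eq_monomial,
    _root_.map_mul, _root_.map_prod, _root_.map_pow, Finsupp.degree_apply]
  ring

theorem map_homogeneousPiece_eq_reesPiece (hI : I = span (Set.range f)) (b : ℤ) :
    (homogeneousPiece (Fin (n + 1)) B b).map
      (reesStructureMap I f hf).toRingHom.toAddMonoidHom = reesPiece I b := by
  have h_mem : ∀ b, ∀ p ∈ homogeneousPiece (Fin (n + 1)) B b,
      reesStructureMap I f hf p ∈ reesPiece I b := by
    intro b p hp
    refine mem_reesPiece.2 fun i hi => ?_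
    rw [coe_reesStructureMap, MvPolynomial.as_sum p, _root_.map_sum,
      Polynomial.finsetSum_coeff] at hi
    obtain ⟨w, hw, hwi⟩ := Finset.exists_ne_zero_of_sum_ne_zero hi
    rw [aeval_X_mul_C_monomial, Polynomial.coeff_monomial, ite_ne_right_iff] at hwi
    rw [← hwi.1]
    exact mem_homogeneousPiece.1 hp w (MvPolynomial.mem_support_iff.1 hw)
  refine le_antisymm ?_ fun x hx => ?_
  · rintro _ ⟨p, hp, rfl⟩
    exact h_mem b p hp
  · exact exists_mem_map_eq (iSup_homogeneousPiece (Fin (n + 1)) B) (iSupIndep_reesPiece I) h_mem hx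
      (reesStructureMap_surjective hI x)

variable {B γ : Type} [CommRing B] [IsNoetherianRing B] {n : ℕ} {I : Ideal B}
  {f : Fin (n + 1) → B} {hf : ∀ j, f j ∈ I}

theorem yreg_reesAlgebra_zero_general (K : Type) [Field K] [Algebra K B]
    (hB : IsCohenMacaulay B) (hI : I = span (Set.range f)) (h_height : (n : ℕ∞) ≤ idealHeight I)
    (h_linear : IsLinearTypePres (reesStructureMap I f hf))
    [AddCommGroup γ] (yDeg : γ →+ ℤ) {𝒜 : γ → Submodule K (MvPolynomial (Fin (n + 1)) B)}
    {ℳ : γ → Submodule K (reesAlgebra I)} {𝔪 : Ideal (MvPolynomial (Fin (n + 1)) B)}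
    (h_one : 1 ∈ 𝒜 0) (h𝒜 : ∀ g, ∀ p ∈ 𝒜 g, p ∈ homogeneousPiece (Fin (n + 1)) B (yDeg g))
    (hℳ : ∀ g, ∀ x ∈ ℳ g, x ∈ reesPiece I (yDeg g)) (h𝔪_X : ∀ j, X j ∈ 𝔪) (h𝔪_one : 1 ∉ 𝔪) :
    letI := reesModule I f hf
    ∀ (R : MinGradedFreeRes K (MvPolynomial (Fin (n + 1)) B) 𝒜 𝔪 (reesAlgebra I) ℳ) (i : ℕ)
      (k : R.ι i), yDeg (R.σ i k) ≤ i := by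
  let := reesModule I f hf
  intro R
  let ρ : MvPolynomial (Fin (n + 1)) B →ₗ[MvPolynomial (Fin (n + 1)) B] reesAlgebra I :=
    { reesStructureMap I f hf with map_smul' := _root_.map_mul (reesStructureMap I f hf) }
  have h_map : ∀ b, (homogeneousPiece (Fin (n + 1)) B b).map ρ.toAddMonoidHom = reesPiece I b :=
    map_homogeneousPiece_eq_reesPiece hI
  have h_torsion := Koszul.isTorsionAbove_one_of_le_height hB f fun P hP hfP =>
    (h_height.trans (iInf₂_le (⟨P, hP⟩ : PrimeSpectrum B) (hI.trans_le hfP))).trans_eq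
      (PrimeSpectrum.height_eq_orderHeight _).symm
  have h_vanishes := Koszul.vanishesAbove_map_of_ker_eq h_torsion (List.nodup_finRange (n + 1))
    (List.nodup_finRange (n + 1)) List.mem_finRange ρ
    fun b p hp => reesStructureMap_eq_zero_iff h_linear hp
  simp only [h_map] at h_vanishes
  refine R.degree_le h_one yDeg h𝒜 h𝔪_X h𝔪_one hℳ ?_ (iSupIndep_reesPiece I)
    (List.nodup_finRange (n + 1)) List.mem_finRange h_vanishes
  intro s t p hp x hx
  rw [← h_map] at hx ⊢
  obtain ⟨q, hq, rfl⟩ := hx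
  exact ⟨p • q, mul_mem_homogeneousPiece hp hq, _root_.map_smul ρ p q⟩

end ReesAlgebra

section Bigraded

variable {K : Type} [Field K] {m n : ℕ}

theorem one_notMem_mS : (1 : MvPolynomial (Fin (n + 1)) (MvPolynomial (Fin m) K)) ∉ mS K m n := by
  have h_le : mS K m n ≤
      RingHom.ker (MvPolynomial.constantCoeff.comp MvPolynomial.constantCoeff) := by
    refine Ideal.span_le.2 ?_
    rintro _ (⟨j, rfl⟩ | ⟨j, rfl⟩) <;> simp
  intro h_one
  simpa using h_le h_one

theorem mem_homogeneousPiece_of_mem_SPieces {d : Fin (n + 1) → ℕ} {ab : ℤ × ℤ}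
    {p : MvPolynomial (Fin (n + 1)) (MvPolynomial (Fin m) K)} (hp : p ∈ SPieces K m n d ab) :
    p ∈ homogeneousPiece (Fin (n + 1)) (MvPolynomial (Fin m) K) ab.2 := by
  refine mem_homogeneousPiece.2 fun w hw => ?_
  by_contra h_degree
  rw [Finsupp.degree_eq_sum, Nat.cast_sum] at h_degree
  have hw_mem := hp w
  rw [SAux, if_neg fun h => h_degree h.1] at hw_mem
  exact hw hw_mem

theorem one_mem_SPieces (d : Fin (n + 1) → ℕ) : 1 ∈ SPieces K m n d 0 := by
  classical
  intro w
  rw [MvPolynomial.coeff_one]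
  split_ifs with hw
  · subst hw
    simpa [SAux] using ⟨1, _root_.map_one _⟩
  · exact zero_mem _

theorem mem_reesPiece_of_mem_RPieces {I : Ideal (MvPolynomial (Fin m) K)} {ab : ℤ × ℤ}
    {x : reesAlgebra I} (hx : x ∈ RPieces K m I ab) : x ∈ reesPiece I ab.2 := by
  refine mem_reesPiece.2 fun i hi => ?_
  by_contra h_degree
  have hi_mem := hx i
  rw [RAux, if_neg fun h => h_degree h.1] at hi_mem
  exact hi hi_mem

end Bigraded

set_option maxHeartbeats 1000000 in
set_option synthInstance.maxHeartbeats 400000 in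
/-- The `y`-regularity of the Rees algebra of a linear-type ideal `I` with
`μ(I) = grade(I) + 1` is `0`: in any minimal bigraded free resolution of `R(I)` over
`S = K[x_1,…,x_m,y_0,…,y_n]` (with `deg x_i = (1,0)`, `deg y_j = (d_j,1)`), every
bigraded shift `(a,b)` appearing in homological degree `i` satisfies `b ≤ i`. -/
theorem yreg_reesAlgebra_zero (K : Type) [Field K] (m n : ℕ)
    (I : Ideal (MvPolynomial (Fin m) K)) (d : Fin (n + 1) → ℕ)
    (f : Fin (n + 1) → MvPolynomial (Fin m) K) (hf : ∀ j, f j ∈ I)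
    (hI : I = Ideal.span (Set.range f))
    (hhomog : ∀ j, f j ∈ MvPolynomial.homogeneousSubmodule (Fin m) K (d j))
    (hht : idealHeight I = (n : ℕ∞))
    (hlt : IsLinearTypePres (reesStructureMap I f hf))
    (instM : Module (MvPolynomial (Fin (n + 1)) (MvPolynomial (Fin m) K)) (reesAlgebra I))
    (hinstM : instM = reesModule I f hf) :
    ∀ R : @MinGradedFreeRes K _ (MvPolynomial (Fin (n + 1)) (MvPolynomial (Fin m) K)) _ _
        (ℤ × ℤ) _ (SPieces K m n d) (mS K m n)
        (reesAlgebra I) _ instM _ (RPieces K m I),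
      ∀ (i : ℕ) (k : R.ι i), (R.σ i k).2 ≤ (i : ℤ) := by
  subst hinstM
  exact yreg_reesAlgebra_zero_general K (IsCohenMacaulay.mvPolynomial_fin (.field K) m) hI hht.ge
    hlt (AddMonoidHom.snd ℤ ℤ) (one_mem_SPieces d) (fun _ _ => mem_homogeneousPiece_of_mem_SPieces)
    (fun _ _ => mem_reesPiece_of_mem_RPieces) (fun j => Ideal.subset_span (.inl ⟨j, rfl⟩))
    one_notMem_mS
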